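/- Anisotropy of E10 root multiplicities: there exist nonzero n, n' ∈ ℕ^{10}, each of height at most 340 and each with nᵀ A(E10) n ≤ 2 (so both are positive roots of E10), such that nᵀ A(E10) n = n'ᵀ A(E10) n' but mult(n) ≠ mult(n'); that is, the root multiplicity of E10 is not a function of the norm β² alone. -/

import Mathlib

noncomputable section

open CartanMatrix

/-- A generalized Cartan matrix: `A i i = 2`, off-diagonal entries are non-positive, and
`A i j = 0 ↔ A j i = 0`. -/
def IsGCM {B : Type*} (A : Matrix B B ℤ) : Prop :=
  (∀ i, A i i = 2) ∧ (∀ i j, i ≠ j → A i j ≤ 0) ∧ (∀ i j, A i j = 0 ↔ A j i = 0)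

/-- The images in the Kac–Moody algebra `Matrix.ToLieAlgebra ℚ A` of the generators of the
free Lie algebra. -/
def KMgen {B : Type*} [DecidableEq B] (A : Matrix B B ℤ) (x : Generators B) :
    Matrix.ToLieAlgebra ℚ A :=
  LieSubmodule.Quotient.mk (N := Relations.toIdeal ℚ A) (FreeLieAlgebra.of ℚ x)

/-- The Cartan generator `h i`. -/
def gH {B : Type*} [DecidableEq B] (A : Matrix B B ℤ) (i : B) : Matrix.ToLieAlgebra ℚ A :=
  KMgen A (Generators.H i)

/-- The raising generator `e i`. -/
def gE {B : Type*} [DecidableEq B] (A : Matrix B B ℤ) (i : B) : Matrix.ToLieAlgebra ℚ A :=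
  KMgen A (Generators.E i)

/-- The lowering generator `f i`. -/
def gF {B : Type*} [DecidableEq B] (A : Matrix B B ℤ) (i : B) : Matrix.ToLieAlgebra ℚ A :=
  KMgen A (Generators.F i)

/-- The root space of `g(A)` attached to `n : B → ℤ`: the simultaneous eigenspace of the
adjoint action of the Cartan generators `h i`, with eigenvalues `∑ j, A i j * n j`. -/
def rootSpace {B : Type*} [Fintype B] [DecidableEq B] (A : Matrix B B ℤ) (n : B → ℤ) :
    Submodule ℚ (Matrix.ToLieAlgebra ℚ A) :=
  ⨅ i, Module.End.eigenspace
    (LieAlgebra.ad ℚ (Matrix.ToLieAlgebra ℚ A) (gH A i)) ((∑ j, A i j * n j : ℤ) : ℚ)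

/-- The multiplicity of `n` in `g(A)`: the dimension of the root space. -/
def rootMult {B : Type*} [Fintype B] [DecidableEq B] (A : Matrix B B ℤ) (n : B → ℤ) : ℕ :=
  Module.finrank ℚ (rootSpace A n)

/-- The Cartan matrix of `E10` (node 1 ↦ index `0` is the overextended node; indices `0`–`8`
form a chain and index `9` is attached to index `6`). -/
def E10M : Matrix (Fin 10) (Fin 10) ℤ := fun i j =>
  if i = j then 2
  else if (i.val + 1 = j.val ∧ j.val ≤ 8) ∨ (j.val + 1 = i.val ∧ i.val ≤ 8) ∨
          (i.val = 6 ∧ j.val = 9) ∨ (i.val = 9 ∧ j.val = 6) then -1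
  else 0

/-- The number of partitions of `k` into parts of `c` colours: the number of finitely
supported functions `f : ℕ+ × Fin c → ℕ` with `∑ j·f(j,s) = k` (so that
`∑ k, p_c(k) qᵏ = ∏_{j ≥ 1} (1 - qʲ)⁻ᶜ`), with `p_c(k) = 0` for `k < 0`. -/
def coloredPartitions (c : ℕ) (k : ℤ) : ℕ :=
  if k < 0 then 0
  else Nat.card {f : ℕ+ × Fin c →₀ ℕ // ∑ p ∈ f.support, (p.1 : ℕ) * f p = k.toNat}

/-- The norm `nᵀ A n` of a vector of natural numbers with respect to a Cartan matrix. -/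
def qform {d : ℕ} (A : Matrix (Fin d) (Fin d) ℤ) (n : Fin d → ℕ) : ℤ :=
  ∑ i, ∑ j, (n i : ℤ) * A i j * (n j : ℤ)

/-!
On the positive part of `g(A)`, for `A` symmetric, simply laced and injective, let `δ` be the
standard Lie cobracket with its components involving the Cartan subalgebra removed. The bracket
composed with `δ` is the scalar `(β, β) - 2 ht β` on the root space of `β`. Taking the trace of the
composition in the other order, on the sum of the `g_α ⊗ g_(β - α)`, gives a Peterson-type formula
`∑_α τ(α, β - α) = ((β, β) - 2 ht β) mult β`, where `τ(α, γ)` is the trace of `δ ∘ [·, ·]` on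
`g_α ⊗ g_γ`. As `δ` comes from a `1`-cocycle, `τ` satisfies a recursion of Euclidean kind, in which
`τ(α, γ)` is reduced to `τ(α, γ - α)` and `τ(α - γ, γ)`; so the multiplicity of a non-simple root is
determined by those of smaller roots.

In `E10`, reflections take the roots of norm at least `-4` and height at most `120` to simple roots
or to one of seven antidominant vectors, and the formula shows that their multiplicities depend only
on the norm. With these values the formula can be evaluated at two antidominant vectors of norm
`-6`, of heights `93` and `121`, and gives the multiplicities `727` and `726`.
-/

section ChevalleySystem

variable {ι L : Type*} [LieRing L] [LieAlgebra ℚ L]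

/-- The Chevalley relations with Cartan matrix `A`, without the Serre relations. -/
structure IsChevalleySystem (A : Matrix ι ι ℤ) (h e f : ι → L) : Prop where
  lie_h_h : ∀ i j, ⁅h i, h j⁆ = 0
  lie_e_f_self : ∀ i, ⁅e i, f i⁆ = h i
  lie_e_f_of_ne : ∀ i j, i ≠ j → ⁅e i, f j⁆ = 0
  lie_h_e : ∀ i j, ⁅h i, e j⁆ = (A i j : ℚ) • e j
  lie_h_f : ∀ i j, ⁅h i, f j⁆ = -((A i j : ℚ) • f j)

/-- The Serre relations `(ad eᵢ)^(1 - Aᵢⱼ) eⱼ = 0`, in the form used by Mathlib's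
`CartanMatrix.Relations.adE`. -/
def IsSerreFamily (A : Matrix ι ι ℤ) (e : ι → L) : Prop :=
  ∀ i j, ((LieAlgebra.ad ℚ L (e i)) ^ (-A i j).toNat) ⁅e i, e j⁆ = 0

/-- The Chevalley–Serre relations, i.e. the defining relations of `g(A)`. -/
structure IsChevalleySerreSystem (A : Matrix ι ι ℤ) (h e f : ι → L) : Prop
    extends IsChevalleySystem A h e f where
  serre_e : IsSerreFamily A e
  serre_f : IsSerreFamily A f

variable {A : Matrix ι ι ℤ} {h e f : ι → L}

namespace IsChevalleySystem

theorem swap (c : IsChevalleySystem A h e f) : IsChevalleySystem A (-h) f e where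
  lie_h_h i j := by simp [c.lie_h_h]
  lie_e_f_self i := by rw [← lie_skew, c.lie_e_f_self, Pi.neg_apply]
  lie_e_f_of_ne i j hij := by rw [← lie_skew, c.lie_e_f_of_ne j i hij.symm, neg_zero]
  lie_h_e i j := by rw [Pi.neg_apply, neg_lie, c.lie_h_f, neg_neg]
  lie_h_f i j := by rw [Pi.neg_apply, neg_lie, c.lie_h_e]

theorem lie_e_h (c : IsChevalleySystem A h e f) (i j : ι) : ⁅e i, h j⁆ = -((A j i : ℚ) • e i) := by
  rw [← lie_skew, c.lie_h_e]

theorem lie_f_h (c : IsChevalleySystem A h e f) (i j : ι) : ⁅f i, h j⁆ = (A j i : ℚ) • f i := by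
  rw [← lie_skew, c.lie_h_f, neg_neg]

theorem lie_f_e_self (c : IsChevalleySystem A h e f) (i : ι) : ⁅f i, e i⁆ = -h i :=
  c.swap.lie_e_f_self i

theorem lie_f_e_of_ne (c : IsChevalleySystem A h e f) {i j : ι} (hij : i ≠ j) : ⁅f i, e j⁆ = 0 :=
  c.swap.lie_e_f_of_ne i j hij

end IsChevalleySystem

/-- A symmetric simply laced generalized Cartan matrix. -/
structure IsSymmSimplyLaced (A : Matrix ι ι ℤ) : Prop where
  isSymm : A.IsSymm
  diag : ∀ i, A i i = 2
  isSimplyLaced : A.IsSimplyLaced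

theorem IsSymmSimplyLaced.apply_comm (hA : IsSymmSimplyLaced A) (i j : ι) : A i j = A j i :=
  (hA.isSymm.apply i j).symm

theorem isSerreFamily_iff_of_isSymmSimplyLaced (hA : IsSymmSimplyLaced A) :
    IsSerreFamily A e ↔
      (∀ i j, A i j = 0 → ⁅e i, e j⁆ = 0) ∧ ∀ i j, A i j = -1 → ⁅e i, ⁅e i, e j⁆⁆ = 0 := by
  refine ⟨fun s ↦ ⟨fun i j hij ↦ ?_, fun i j hij ↦ ?_⟩, fun ⟨s₀, s₁⟩ i j ↦ ?_⟩
  · simpa [hij] using s i j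
  · simpa [hij] using s i j
  · rcases eq_or_ne i j with rfl | hij
    · simp
    · rcases hA.isSimplyLaced hij with h | h
      · simp [s₀ i j h]
      · simp [h, s₁ i j h]

end ChevalleySystem

section Presentation

variable {ι : Type*} [DecidableEq ι] {A : Matrix ι ι ℤ}

theorem lieHom_ad_pow_apply {L L' : Type*} [LieRing L] [LieAlgebra ℚ L] [LieRing L']
    [LieAlgebra ℚ L'] (φ : L →ₗ⁅ℚ⁆ L') (x y : L) (n : ℕ) :
    φ ((LieAlgebra.ad ℚ L x ^ n) y) = (LieAlgebra.ad ℚ L' (φ x) ^ n) (φ y) := by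
  induction n generalizing y with
  | zero => simp
  | succ n ih => simp [pow_succ, ih]

variable (A) in
/-- The quotient map from the free Lie algebra onto `g(A)`. -/
def freeToKacMoody : FreeLieAlgebra ℚ (Generators ι) →ₗ⁅ℚ⁆ Matrix.ToLieAlgebra ℚ A where
  toLinearMap := (Relations.toIdeal ℚ A).toSubmodule.mkQ
  map_lie' := rfl

theorem freeToKacMoody_surjective : Function.Surjective (freeToKacMoody A) :=
  Submodule.mkQ_surjective _

theorem ker_freeToKacMoody : (freeToKacMoody A).ker = Relations.toIdeal ℚ A := by
  ext x
  exact Submodule.Quotient.mk_eq_zero (Relations.toIdeal ℚ A).toSubmodule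

@[simp]
theorem freeToKacMoody_of_H (i : ι) :
    freeToKacMoody A (FreeLieAlgebra.of ℚ (Generators.H i)) = gH A i := rfl

@[simp]
theorem freeToKacMoody_of_E (i : ι) :
    freeToKacMoody A (FreeLieAlgebra.of ℚ (Generators.E i)) = gE A i := rfl

@[simp]
theorem freeToKacMoody_of_F (i : ι) :
    freeToKacMoody A (FreeLieAlgebra.of ℚ (Generators.F i)) = gF A i := rfl

theorem freeToKacMoody_eq_zero {x : FreeLieAlgebra ℚ (Generators ι)}
    (hx : x ∈ Relations.toSet ℚ A) : freeToKacMoody A x = 0 := by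
  have : x ∈ (freeToKacMoody A).ker := ker_freeToKacMoody (A := A) ▸ LieSubmodule.subset_lieSpan hx
  simpa using this

theorem isChevalleySerreSystem_generators :
    IsChevalleySerreSystem A (gH A) (gE A) (gF A) where
  lie_h_h i j := by
    simpa [Relations.HH] using
      freeToKacMoody_eq_zero (A := A) (x := Relations.HH ℚ (i, j)) (by simp [Relations.toSet])
  lie_e_f_self i := by
    simpa [Relations.EF, sub_eq_zero] using
      freeToKacMoody_eq_zero (A := A) (x := Relations.EF ℚ (i, i)) (by simp [Relations.toSet])
  lie_e_f_of_ne i j hij := by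
    simpa [Relations.EF, hij] using
      freeToKacMoody_eq_zero (A := A) (x := Relations.EF ℚ (i, j)) (by simp [Relations.toSet])
  lie_h_e i j := by
    simpa [Relations.HE, sub_eq_zero, Int.cast_smul_eq_zsmul] using
      freeToKacMoody_eq_zero (x := Relations.HE ℚ A (i, j)) (by simp [Relations.toSet])
  lie_h_f i j := by
    simpa [Relations.HF, add_eq_zero_iff_eq_neg, Int.cast_smul_eq_zsmul] using
      freeToKacMoody_eq_zero (x := Relations.HF ℚ A (i, j)) (by simp [Relations.toSet])
  serre_e i j := by
    simpa [Relations.adE, lieHom_ad_pow_apply] using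
      freeToKacMoody_eq_zero (x := Relations.adE ℚ A (i, j)) (by simp [Relations.toSet])
  serre_f i j := by
    simpa [Relations.adF, lieHom_ad_pow_apply] using
      freeToKacMoody_eq_zero (x := Relations.adF ℚ A (i, j)) (by simp [Relations.toSet])

theorem range_KMgen :
    Set.range (KMgen A) = Set.range (gH A) ∪ Set.range (gE A) ∪ Set.range (gF A) := by
  ext x
  constructor
  · rintro ⟨i | i | i, rfl⟩
    exacts [.inl (.inl ⟨i, rfl⟩), .inl (.inr ⟨i, rfl⟩), .inr ⟨i, rfl⟩]
  · rintro ((⟨i, rfl⟩ | ⟨i, rfl⟩) | ⟨i, rfl⟩) <;> exact ⟨_, rfl⟩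

theorem lieSpan_generators_eq_top :
    LieSubalgebra.lieSpan ℚ (Matrix.ToLieAlgebra ℚ A)
      (Set.range (gH A) ∪ Set.range (gE A) ∪ Set.range (gF A)) = ⊤ := by
  set K := LieSubalgebra.lieSpan ℚ (Matrix.ToLieAlgebra ℚ A)
    (Set.range (gH A) ∪ Set.range (gE A) ∪ Set.range (gF A))
  have hmem (x : Generators ι) : KMgen A x ∈ K :=
    LieSubalgebra.subset_lieSpan (range_KMgen (A := A) ▸ Set.mem_range_self x)
  have hfactor : K.incl.comp (FreeLieAlgebra.lift ℚ fun x ↦ (⟨KMgen A x, hmem x⟩ : K)) =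
      freeToKacMoody A := by
    ext x
    cases x <;> simp [gH, gE, gF]
  refine eq_top_iff.2 fun x _ ↦ ?_
  obtain ⟨y, rfl⟩ := freeToKacMoody_surjective x
  rw [← hfactor]
  exact (FreeLieAlgebra.lift ℚ (fun x ↦ (⟨KMgen A x, hmem x⟩ : K)) y).2

variable {L : Type*} [LieRing L] [LieAlgebra ℚ L] {h e f : ι → L}

theorem kacMoody_lieHom_ext {φ ψ : Matrix.ToLieAlgebra ℚ A →ₗ⁅ℚ⁆ L}
    (hφψ : ∀ x, φ (KMgen A x) = ψ (KMgen A x)) : φ = ψ := by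
  have hcomp : φ.comp (freeToKacMoody A) = ψ.comp (freeToKacMoody A) := by
    ext x
    exact hφψ x
  ext x
  obtain ⟨y, rfl⟩ := freeToKacMoody_surjective x
  exact LieHom.congr_fun hcomp y

/-- The map sending the free generators to a triple of families. -/
def generatorMap (h e f : ι → L) : Generators ι → L
  | .H i => h i
  | .E i => e i
  | .F i => f i

theorem IsChevalleySerreSystem.toIdeal_le_ker_lift (c : IsChevalleySerreSystem A h e f) :
    Relations.toIdeal ℚ A ≤ (FreeLieAlgebra.lift ℚ (generatorMap h e f)).ker := by
  refine LieSubmodule.lieSpan_le.2 fun x hx ↦ ?_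
  rw [SetLike.mem_coe, LieHom.mem_ker]
  rcases hx with ((((hx | hx) | hx) | hx) | hx) | hx <;> obtain ⟨⟨i, j⟩, rfl⟩ := hx
  · simp [Relations.HH, generatorMap, c.lie_h_h]
  · rcases eq_or_ne i j with rfl | hij
    · simp [Relations.EF, generatorMap, c.lie_e_f_self]
    · simp [Relations.EF, generatorMap, hij, c.lie_e_f_of_ne i j hij]
  · simp [Relations.HE, generatorMap, c.lie_h_e, Int.cast_smul_eq_zsmul]
  · simp [Relations.HF, generatorMap, c.lie_h_f, Int.cast_smul_eq_zsmul]
  · simpa [Relations.adE, generatorMap, lieHom_ad_pow_apply] using c.serre_e i j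
  · simpa [Relations.adF, generatorMap, lieHom_ad_pow_apply] using c.serre_f i j

theorem IsChevalleySerreSystem.exists_lieHom (c : IsChevalleySerreSystem A h e f) :
    ∃ φ : Matrix.ToLieAlgebra ℚ A →ₗ⁅ℚ⁆ L,
      (∀ i, φ (gH A i) = h i) ∧ (∀ i, φ (gE A i) = e i) ∧ ∀ i, φ (gF A i) = f i := by
  set φ₀ := FreeLieAlgebra.lift ℚ (generatorMap h e f)
  let φ : Matrix.ToLieAlgebra ℚ A →ₗ⁅ℚ⁆ L :=
    { toLinearMap := (Relations.toIdeal ℚ A).toSubmodule.liftQ (φ₀ : _ →ₗ[ℚ] L)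
        fun x hx ↦ by simpa using c.toIdeal_le_ker_lift hx
      map_lie' := by
        intro x y
        obtain ⟨x, rfl⟩ := freeToKacMoody_surjective x
        obtain ⟨y, rfl⟩ := freeToKacMoody_surjective y
        exact φ₀.map_lie x y }
  have hφ (x : Generators ι) : φ (KMgen A x) = generatorMap h e f x :=
    FreeLieAlgebra.lift_of_apply _ x
  exact ⟨φ, fun i ↦ hφ (.H i), fun i ↦ hφ (.E i), fun i ↦ hφ (.F i)⟩

end Presentation

section Cobracket

open scoped TensorProduct
open LieAlgebra (ofProd)
open LieModule.Cohomology (twoCocycle)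

variable {ι L : Type*} [LieRing L] [LieAlgebra ℚ L]

/-- The wedge `x ∧ y = (x ⊗ y - y ⊗ x) / 2`, as an element of the tensor square. -/
def wedge : L →ₗ[ℚ] L →ₗ[ℚ] L ⊗[ℚ] L :=
  (1 / 2 : ℚ) • (TensorProduct.mk ℚ L L - (TensorProduct.mk ℚ L L).flip)

theorem wedge_apply (x y : L) : wedge x y = (1 / 2 : ℚ) • (x ⊗ₜ[ℚ] y - y ⊗ₜ[ℚ] x) := rfl

theorem lie_wedge (x y z : L) : ⁅z, wedge x y⁆ = wedge ⁅z, x⁆ y + wedge x ⁅z, y⁆ := by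
  simp only [wedge_apply, lie_smul, lie_sub, TensorProduct.LieModule.lie_tmul_right]
  module

theorem wedge_swap (x y : L) : wedge x y = -wedge y x := by
  simp only [wedge_apply]
  module

/-- The element `(x, s)` of the semidirect product of `L` with its module `L ⊗ L`, the latter being
the extension of `L` by the zero cocycle. A linear map `δ` is a `1`-cocycle exactly when
`x ↦ (x, δ x)` is a homomorphism of Lie algebras. -/
def semidirectMk (x : L) (s : L ⊗[ℚ] L) :
    LieAlgebra.ofTwoCocycle (0 : twoCocycle ℚ L (L ⊗[ℚ] L)) :=
  ofProd 0 (x, s)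

theorem lie_semidirectMk (x y : L) (s t : L ⊗[ℚ] L) :
    ⁅semidirectMk x s, semidirectMk y t⁆ = semidirectMk ⁅x, y⁆ (⁅x, t⁆ - ⁅y, s⁆) := by
  simp [semidirectMk, LieAlgebra.bracket_ofTwoCocycle]

theorem smul_semidirectMk (a : ℚ) (x : L) (s : L ⊗[ℚ] L) :
    a • semidirectMk x s = semidirectMk (a • x) (a • s) := rfl

theorem neg_semidirectMk (x : L) (s : L ⊗[ℚ] L) :
    -semidirectMk x s = semidirectMk (-x) (-s) := rfl

@[simp]
theorem semidirectMk_zero : semidirectMk (0 : L) 0 = 0 := rfl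

variable {A : Matrix ι ι ℤ} {h e f : ι → L}

theorem IsSerreFamily.semidirectMk_wedge (hA : IsSymmSimplyLaced A) (s : IsSerreFamily A e) (t : ℚ)
    (eh : ∀ i j, ⁅e i, h j⁆ = (t * A i j) • e i) :
    IsSerreFamily A fun i ↦ semidirectMk (e i) (wedge (e i) (h i)) := by
  rw [isSerreFamily_iff_of_isSymmSimplyLaced hA] at s ⊢
  obtain ⟨s₀, s₁⟩ := s
  refine ⟨fun i j hij ↦ ?_, fun i j hij ↦ ?_⟩
  · have hji : A j i = 0 := hA.apply_comm j i ▸ hij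
    simp [lie_semidirectMk, lie_wedge, s₀ i j hij, s₀ j i hji, eh, hij, hji]
  · have hji : A j i = -1 := hA.apply_comm j i ▸ hij
    have h_ij_i : ⁅⁅e i, e j⁆, e i⁆ = 0 := by rw [← lie_skew, s₁ i j hij, neg_zero]
    have h_ij_h : ⁅⁅e i, e j⁆, h i⁆ = t • ⁅e i, e j⁆ := by
      rw [lie_lie, eh, eh, lie_smul, lie_smul, hji, hA.diag, ← lie_skew (e j) (e i)]
      push_cast
      module
    have h_ji : ⁅e j, e i⁆ = -⁅e i, e j⁆ := (lie_skew _ _).symm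
    have hsnd : ⁅e i, ⁅e i, wedge (e j) (h j)⁆ - ⁅e j, wedge (e i) (h i)⁆⁆ -
        ⁅⁅e i, e j⁆, wedge (e i) (h i)⁆ = 0 := by
      simp only [lie_sub, lie_wedge, h_ij_i, h_ij_h, h_ji, eh, hij, hji, s₁ i j hij, hA.diag,
        lie_smul, lie_self, lie_add, lie_neg, map_zero, map_neg, map_smul, LinearMap.zero_apply,
        LinearMap.neg_apply]
      rw [wedge_swap (e i) ⁅e i, e j⁆]
      push_cast
      module
    rw [lie_semidirectMk, lie_semidirectMk, hsnd, s₁ i j hij, semidirectMk_zero]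

theorem IsChevalleySerreSystem.semidirectMk_wedge (hA : IsSymmSimplyLaced A)
    (c : IsChevalleySerreSystem A h e f) :
    IsChevalleySerreSystem A
      (fun i ↦ semidirectMk (h i) 0)
      (fun i ↦ semidirectMk (e i) (wedge (e i) (h i)))
      (fun i ↦ semidirectMk (f i) (wedge (f i) (h i))) where
  lie_h_h i j := by simp [lie_semidirectMk, c.lie_h_h]
  lie_e_f_self i := by
    have hsnd : ⁅e i, wedge (f i) (h i)⁆ - ⁅f i, wedge (e i) (h i)⁆ = 0 := by
      simp [lie_wedge, c.lie_e_f_self, c.lie_f_e_self, c.lie_e_h, c.lie_f_h, hA.diag,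
        wedge_swap (f i)]
    rw [lie_semidirectMk, hsnd, c.lie_e_f_self]
  lie_e_f_of_ne i j hij := by
    have hsnd : ⁅e i, wedge (f j) (h j)⁆ - ⁅f j, wedge (e i) (h i)⁆ = 0 := by
      simp [lie_wedge, c.lie_e_f_of_ne i j hij, c.lie_f_e_of_ne hij.symm, c.lie_e_h, c.lie_f_h,
        wedge_swap (f j), hA.apply_comm j i]
    rw [lie_semidirectMk, hsnd, c.lie_e_f_of_ne i j hij, semidirectMk_zero]
  lie_h_e i j := by
    simp [lie_semidirectMk, lie_wedge, c.lie_h_e, c.lie_h_h, smul_semidirectMk]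
  lie_h_f i j := by
    simp [lie_semidirectMk, lie_wedge, c.lie_h_f, c.lie_h_h, smul_semidirectMk, neg_semidirectMk]
  serre_e := c.serre_e.semidirectMk_wedge hA (-1) fun i j ↦ by
    rw [c.lie_e_h, hA.apply_comm j i]
    module
  serre_f := c.serre_f.semidirectMk_wedge hA 1 fun i j ↦ by
    rw [c.lie_f_h, hA.apply_comm j i, one_mul]

variable [DecidableEq ι]

theorem exists_cobracket (hA : IsSymmSimplyLaced A) :
    ∃ δ : Matrix.ToLieAlgebra ℚ A →ₗ[ℚ] Matrix.ToLieAlgebra ℚ A ⊗[ℚ] Matrix.ToLieAlgebra ℚ A,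
      (∀ x y, δ ⁅x, y⁆ = ⁅x, δ y⁆ - ⁅y, δ x⁆) ∧
        ∀ i, δ (gE A i) = wedge (gE A i) (gH A i) := by
  obtain ⟨φ, hH, hE, hF⟩ := (isChevalleySerreSystem_generators (A := A)).semidirectMk_wedge hA
    |>.exists_lieHom
  let fst : LieAlgebra.ofTwoCocycle (0 : twoCocycle ℚ (Matrix.ToLieAlgebra ℚ A)
      (Matrix.ToLieAlgebra ℚ A ⊗[ℚ] Matrix.ToLieAlgebra ℚ A)) →ₗ⁅ℚ⁆ Matrix.ToLieAlgebra ℚ A :=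
    { toFun p := ((ofProd 0).symm p).1
      map_add' _ _ := rfl
      map_smul' _ _ := rfl
      map_lie' := rfl }
  have hfst : fst.comp φ = LieHom.id := kacMoody_lieHom_ext fun
    | .H i => congr_arg fst (hH i)
    | .E i => congr_arg fst (hE i)
    | .F i => congr_arg fst (hF i)
  refine ⟨{ toFun x := ((ofProd 0).symm (φ x)).2, map_add' := by simp, map_smul' := by simp },
    fun x y ↦ ?_, fun i ↦ congr_arg (fun p ↦ ((ofProd 0).symm p).2) (hE i)⟩
  have hfst_apply (z) : ((ofProd 0).symm (φ z)).1 = z := LieHom.congr_fun hfst z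
  simp [LieAlgebra.bracket_ofTwoCocycle, hfst_apply]

end Cobracket

theorem lie_lie_eq_smul {R L : Type*} [CommRing R] [LieRing L] [LieAlgebra R L] {h x y : L}
    {a b : R} (hx : ⁅h, x⁆ = a • x) (hy : ⁅h, y⁆ = b • y) : ⁅h, ⁅x, y⁆⁆ = (a + b) • ⁅x, y⁆ := by
  rw [leibniz_lie, hx, hy, smul_lie, lie_smul, add_smul]

section WordModule

attribute [local instance] LieRing.ofAssociativeRing LieAlgebra.ofAssociativeAlgebra

variable {ι L : Type*} [LieRing L] [LieAlgebra ℚ L] {A : Matrix ι ι ℤ}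
  {h e f : ι → L}

theorem IsChevalleySystem.lie_f_lie_e (hA : IsSymmSimplyLaced A) (c : IsChevalleySystem A h e f)
    {j k : ι} (hjk : A j k = 0) (i : ι) : ⁅f i, ⁅e j, e k⁆⁆ = 0 := by
  have hne : j ≠ k := by
    rintro rfl
    simp [hA.diag] at hjk
  rw [leibniz_lie]
  rcases eq_or_ne i j with rfl | hij
  · simp [c.lie_f_e_self, c.lie_f_e_of_ne hne, c.lie_h_e, hjk]
  · rcases eq_or_ne i k with rfl | hik
    · simp [c.lie_f_e_self, c.lie_f_e_of_ne hij, c.lie_e_h, hA.apply_comm i j, hjk]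
    · simp [c.lie_f_e_of_ne hij, c.lie_f_e_of_ne hik]

theorem IsChevalleySystem.lie_f_lie_e_lie_e (hA : IsSymmSimplyLaced A)
    (c : IsChevalleySystem A h e f) {j k : ι} (hjk : A j k = -1) (i : ι) :
    ⁅f i, ⁅e j, ⁅e j, e k⁆⁆⁆ = 0 := by
  have hne : j ≠ k := by
    rintro rfl
    simp [hA.diag] at hjk
  rw [leibniz_lie, leibniz_lie (f i) (e j) (e k)]
  rcases eq_or_ne i j with rfl | hij
  · simp [c.lie_f_e_self, c.lie_f_e_of_ne hne, c.lie_h_e, hjk, leibniz_lie (h i), hA.diag]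
    module
  · rcases eq_or_ne i k with rfl | hik
    · simp [c.lie_f_e_self, c.lie_f_e_of_ne hij, c.lie_e_h, hA.apply_comm i j, hjk]
    · simp [c.lie_f_e_of_ne hij, c.lie_f_e_of_ne hik]

variable (ι) in
/-- The free vector space on words. With the operators below it is the Verma module of lowest
weight `0` for the Chevalley relations without the Serre relations. -/
abbrev WordModule := List ι →₀ ℚ

theorem WordModule.end_ext {S T : Module.End ℚ (WordModule ι)}
    (hST : ∀ w, S (.single w 1) = T (.single w 1)) : S = T :=
  Finsupp.lhom_ext' fun w ↦ LinearMap.ext_ring (hST w)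

variable (A) in
/-- The eigenvalue of `h i` on the word `w`. -/
def wordWeight (i : ι) (w : List ι) : ℚ := (w.map fun j ↦ (A i j : ℚ)).sum

/-- The action of `e i` on words, prepending the letter `i`. -/
def raiseOp (i : ι) : Module.End ℚ (WordModule ι) := Finsupp.lmapDomain ℚ ℚ (List.cons i)

variable (A) in
/-- The action of `h i` on words. -/
def weightOp (i : ι) : Module.End ℚ (WordModule ι) :=
  Finsupp.linearCombination ℚ fun w ↦ wordWeight A i w • .single w 1

@[simp]
theorem raiseOp_single (i : ι) (w : List ι) : raiseOp i (.single w 1) = .single (i :: w) 1 := by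
  simp [raiseOp]

@[simp]
theorem weightOp_single (i : ι) (w : List ι) :
    weightOp A i (.single w 1) = wordWeight A i w • .single w 1 := by
  simp [weightOp]

theorem wordWeight_cons (i j : ι) (w : List ι) :
    wordWeight A i (j :: w) = A i j + wordWeight A i w := by
  simp [wordWeight]

theorem lie_weightOp_raiseOp (i j : ι) :
    ⁅weightOp A i, raiseOp j⁆ = (A i j : ℚ) • raiseOp j := by
  refine WordModule.end_ext fun w ↦ ?_
  simp only [LieRing.of_associative_ring_bracket, LinearMap.sub_apply, Module.End.mul_apply,
    LinearMap.smul_apply, raiseOp_single, weightOp_single, map_smul, wordWeight_cons]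
  module

theorem eq_zero_of_lie_raiseOp_eq_zero {T : Module.End ℚ (WordModule ι)}
    (hnil : T (.single [] 1) = 0) (hT : ∀ i : ι, ⁅raiseOp i, T⁆ = 0) : T = 0 := by
  refine WordModule.end_ext fun w ↦ ?_
  induction w with
  | nil => simpa using hnil
  | cons k w ih =>
    simpa [LieRing.of_associative_ring_bracket, ih] using LinearMap.congr_fun (hT k) (.single w 1)

variable (A) in
/-- The left-hand sides of the Serre relations, as operators on words. -/
inductive IsSerreOp : Module.End ℚ (WordModule ι) → Prop
  | lie {i j : ι} (hij : A i j = 0) : IsSerreOp ⁅raiseOp i, raiseOp j⁆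
  | lie_lie {i j : ι} (hij : A i j = -1) : IsSerreOp ⁅raiseOp i, ⁅raiseOp i, raiseOp j⁆⁆

theorem IsSerreOp.exists_lie_weightOp {S : Module.End ℚ (WordModule ι)} (hS : IsSerreOp A S)
    (i : ι) : ∃ t : ℚ, ⁅weightOp A i, S⁆ = t • S := by
  cases hS with
  | lie => exact ⟨_, lie_lie_eq_smul (lie_weightOp_raiseOp i _) (lie_weightOp_raiseOp i _)⟩
  | lie_lie => exact ⟨_, lie_lie_eq_smul (lie_weightOp_raiseOp i _)
      (lie_lie_eq_smul (lie_weightOp_raiseOp i _) (lie_weightOp_raiseOp i _))⟩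

variable (A) in
/-- The generators `eᵢ₁ ⋯ eᵢₙ S m` of the Serre submodule. -/
inductive IsSerreElement : WordModule ι → Prop
  | apply {S : Module.End ℚ (WordModule ι)} (hS : IsSerreOp A S) (m : WordModule ι) :
    IsSerreElement (S m)
  | raise (i : ι) {m : WordModule ι} (hm : IsSerreElement m) : IsSerreElement (raiseOp i m)

variable (A) in
/-- The submodule by which the word module has to be divided for the Serre relations to hold. -/
def serreSubmodule : Submodule ℚ (WordModule ι) := Submodule.span ℚ {m | IsSerreElement A m}

theorem IsSerreElement.mem {m : WordModule ι} (hm : IsSerreElement A m) : m ∈ serreSubmodule A :=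
  Submodule.subset_span hm

theorem serreSubmodule_le_iff {N : Submodule ℚ (WordModule ι)} :
    serreSubmodule A ≤ N ↔ ∀ m, IsSerreElement A m → m ∈ N :=
  Submodule.span_le

theorem serreSubmodule_le_comap_raiseOp (i : ι) :
    serreSubmodule A ≤ (serreSubmodule A).comap (raiseOp i) :=
  serreSubmodule_le_iff.2 fun _ hm ↦ (hm.raise i).mem

theorem apply_apply_eq_of_lie_eq {V : Type*} [AddCommGroup V] [Module ℚ V]
    {S T U : Module.End ℚ V} (hU : ⁅S, T⁆ = U) (v : V) : S (T v) = U v + T (S v) := by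
  rw [← hU, LieRing.of_associative_ring_bracket, LinearMap.sub_apply]
  exact (sub_add_cancel _ _).symm

theorem serreSubmodule_le_comap_weightOp (i : ι) :
    serreSubmodule A ≤ (serreSubmodule A).comap (weightOp A i) := by
  refine serreSubmodule_le_iff.2 fun m hm ↦ ?_
  induction hm with
  | apply hS m =>
    obtain ⟨t, ht⟩ := hS.exists_lie_weightOp i
    rw [Submodule.mem_comap, apply_apply_eq_of_lie_eq ht]
    exact add_mem (Submodule.smul_mem _ _ (IsSerreElement.apply hS m).mem)
      (IsSerreElement.apply hS _).mem
  | raise j hm ih =>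
    rw [Submodule.mem_comap, apply_apply_eq_of_lie_eq (lie_weightOp_raiseOp i j)]
    exact add_mem (Submodule.smul_mem _ _ (hm.raise j).mem) (serreSubmodule_le_comap_raiseOp j ih)

variable (ι) in
/-- The functional taking the value `1` on every word. It does not see the order of the letters,
so it kills the Serre submodule. -/
def wordCount : WordModule ι →ₗ[ℚ] ℚ := Finsupp.linearCombination ℚ fun _ ↦ 1

theorem wordCount_raiseOp (i : ι) (m : WordModule ι) :
    wordCount ι (raiseOp i m) = wordCount ι m := by
  have hcomp : wordCount ι ∘ₗ raiseOp i = wordCount ι := by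
    refine Finsupp.lhom_ext' fun w ↦ LinearMap.ext_ring ?_
    simp [wordCount]
  exact LinearMap.congr_fun hcomp m

theorem serreSubmodule_le_ker_wordCount : serreSubmodule A ≤ LinearMap.ker (wordCount ι) := by
  refine serreSubmodule_le_iff.2 fun m hm ↦ ?_
  induction hm with
  | apply hS m => cases hS <;> simp [LieRing.of_associative_ring_bracket, wordCount_raiseOp]
  | raise i _ ih => simpa [wordCount_raiseOp] using ih

variable [DecidableEq ι]

variable (A) in
/-- The value of `lowerOp A i` on a word, obtained by moving `f i` past the letters towards the
empty word, which it annihilates. -/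
def lowerWord (i : ι) : List ι → WordModule ι
  | [] => 0
  | j :: w => raiseOp j (lowerWord i w) - if i = j then wordWeight A i w • .single w 1 else 0

variable (A) in
/-- The action of `f i` on words. -/
def lowerOp (i : ι) : Module.End ℚ (WordModule ι) :=
  Finsupp.linearCombination ℚ (lowerWord A i)

@[simp]
theorem lowerOp_single (i : ι) (w : List ι) : lowerOp A i (.single w 1) = lowerWord A i w := by
  simp [lowerOp]

theorem weightOp_lowerWord (i j : ι) (w : List ι) :
    weightOp A i (lowerWord A j w) = (wordWeight A i w - A i j) • lowerWord A j w := by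
  induction w with
  | nil => simp [lowerWord]
  | cons k w ih =>
    have hcomm := LinearMap.congr_fun (lie_weightOp_raiseOp (A := A) i k) (lowerWord A j w)
    rw [LieRing.of_associative_ring_bracket, LinearMap.sub_apply, Module.End.mul_apply,
      Module.End.mul_apply, ih, map_smul, sub_eq_iff_eq_add] at hcomm
    simp only [lowerWord, map_sub, hcomm, wordWeight_cons, LinearMap.smul_apply]
    split_ifs with hjk
    · subst hjk
      simp only [map_smul, weightOp_single]
      module
    · simp only [map_zero]
      module

variable (A) in
theorem isChevalleySystem_wordOps :
    IsChevalleySystem A (weightOp A) raiseOp (lowerOp A) where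
  lie_h_h i j := WordModule.end_ext fun w ↦ by
    simp only [LieRing.of_associative_ring_bracket, LinearMap.sub_apply, Module.End.mul_apply,
      weightOp_single, map_smul, LinearMap.zero_apply]
    module
  lie_e_f_self i := WordModule.end_ext fun w ↦ by
    simp [LieRing.of_associative_ring_bracket, lowerWord]
  lie_e_f_of_ne i j hij := WordModule.end_ext fun w ↦ by
    simp [LieRing.of_associative_ring_bracket, lowerWord, hij.symm]
  lie_h_e := lie_weightOp_raiseOp
  lie_h_f i j := WordModule.end_ext fun w ↦ by
    simp only [LieRing.of_associative_ring_bracket, LinearMap.sub_apply, Module.End.mul_apply,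
      lowerOp_single, weightOp_single, weightOp_lowerWord, map_smul, LinearMap.neg_apply,
      LinearMap.smul_apply]
    module

theorem isSerreFamily_lowerOp (hA : IsSymmSimplyLaced A) : IsSerreFamily A (lowerOp A) := by
  have c := (isChevalleySystem_wordOps A).swap
  refine (isSerreFamily_iff_of_isSymmSimplyLaced hA).2 ⟨fun i j hij ↦ ?_, fun i j hij ↦ ?_⟩
  · exact eq_zero_of_lie_raiseOp_eq_zero
      (by simp [LieRing.of_associative_ring_bracket, lowerWord]) (c.lie_f_lie_e hA hij)
  · exact eq_zero_of_lie_raiseOp_eq_zero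
      (by simp [LieRing.of_associative_ring_bracket, lowerWord]) (c.lie_f_lie_e_lie_e hA hij)

theorem IsSerreOp.lie_lowerOp (hA : IsSymmSimplyLaced A) {S : Module.End ℚ (WordModule ι)}
    (hS : IsSerreOp A S) (i : ι) : ⁅lowerOp A i, S⁆ = 0 := by
  cases hS with
  | lie hjk => exact (isChevalleySystem_wordOps A).lie_f_lie_e hA hjk i
  | lie_lie hjk => exact (isChevalleySystem_wordOps A).lie_f_lie_e_lie_e hA hjk i

theorem serreSubmodule_le_comap_lowerOp (hA : IsSymmSimplyLaced A) (i : ι) :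
    serreSubmodule A ≤ (serreSubmodule A).comap (lowerOp A i) := by
  have c := isChevalleySystem_wordOps A
  refine serreSubmodule_le_iff.2 fun m hm ↦ ?_
  induction hm with
  | apply hS m =>
    rw [Submodule.mem_comap, apply_apply_eq_of_lie_eq (hS.lie_lowerOp hA i), LinearMap.zero_apply,
      zero_add]
    exact (IsSerreElement.apply hS _).mem
  | @raise j m hm ih =>
    rw [Submodule.mem_comap]
    rcases eq_or_ne i j with rfl | hij
    · rw [apply_apply_eq_of_lie_eq (c.lie_f_e_self i)]
      exact add_mem (neg_mem (serreSubmodule_le_comap_weightOp i hm.mem))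
        (serreSubmodule_le_comap_raiseOp i ih)
    · rw [apply_apply_eq_of_lie_eq (c.lie_f_e_of_ne hij)]
      exact add_mem (zero_mem _) (serreSubmodule_le_comap_raiseOp j ih)

theorem isChevalleySerreSystem_mapQ (hA : IsSymmSimplyLaced A) :
    IsChevalleySerreSystem A
      (fun i ↦ (serreSubmodule A).mapQ _ (weightOp A i) (serreSubmodule_le_comap_weightOp i))
      (fun i ↦ (serreSubmodule A).mapQ _ (raiseOp i) (serreSubmodule_le_comap_raiseOp i))
      (fun i ↦ (serreSubmodule A).mapQ _ (lowerOp A i)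
        (serreSubmodule_le_comap_lowerOp hA i)) where
  lie_h_h i j := Submodule.linearMap_qext _ <| LinearMap.ext fun m ↦
    congr_arg (serreSubmodule A).mkQ
      (LinearMap.congr_fun ((isChevalleySystem_wordOps A).lie_h_h i j) m)
  lie_e_f_self i := Submodule.linearMap_qext _ <| LinearMap.ext fun m ↦
    congr_arg (serreSubmodule A).mkQ
      (LinearMap.congr_fun ((isChevalleySystem_wordOps A).lie_e_f_self i) m)
  lie_e_f_of_ne i j hij := Submodule.linearMap_qext _ <| LinearMap.ext fun m ↦
    congr_arg (serreSubmodule A).mkQ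
      (LinearMap.congr_fun ((isChevalleySystem_wordOps A).lie_e_f_of_ne i j hij) m)
  lie_h_e i j := Submodule.linearMap_qext _ <| LinearMap.ext fun m ↦
    congr_arg (serreSubmodule A).mkQ (LinearMap.congr_fun (lie_weightOp_raiseOp i j) m)
  lie_h_f i j := Submodule.linearMap_qext _ <| LinearMap.ext fun m ↦
    congr_arg (serreSubmodule A).mkQ
      (LinearMap.congr_fun ((isChevalleySystem_wordOps A).lie_h_f i j) m)
  serre_e := (isSerreFamily_iff_of_isSymmSimplyLaced hA).2
    ⟨fun _ _ hij ↦ Submodule.linearMap_qext _ <| LinearMap.ext fun m ↦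
      (Submodule.Quotient.mk_eq_zero _).2 (IsSerreElement.apply (.lie hij) m).mem,
    fun _ _ hij ↦ Submodule.linearMap_qext _ <| LinearMap.ext fun m ↦
      (Submodule.Quotient.mk_eq_zero _).2 (IsSerreElement.apply (.lie_lie hij) m).mem⟩
  serre_f := by
    obtain ⟨s₀, s₁⟩ :=
      (isSerreFamily_iff_of_isSymmSimplyLaced hA).1 (isSerreFamily_lowerOp hA)
    exact (isSerreFamily_iff_of_isSymmSimplyLaced hA).2
      ⟨fun i j hij ↦ Submodule.linearMap_qext _ <| LinearMap.ext fun m ↦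
        congr_arg (serreSubmodule A).mkQ (LinearMap.congr_fun (s₀ i j hij) m),
      fun i j hij ↦ Submodule.linearMap_qext _ <| LinearMap.ext fun m ↦
        congr_arg (serreSubmodule A).mkQ (LinearMap.congr_fun (s₁ i j hij) m)⟩

theorem gE_ne_zero (hA : IsSymmSimplyLaced A) (i : ι) : gE A i ≠ 0 := by
  obtain ⟨φ, _, hE, _⟩ := (isChevalleySerreSystem_mapQ hA).exists_lieHom
  intro hi
  have hvac := LinearMap.congr_fun (hE i) ((serreSubmodule A).mkQ (.single [] 1))
  rw [hi, map_zero, LinearMap.zero_apply, Submodule.mkQ_apply, Submodule.mapQ_apply,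
    raiseOp_single, eq_comm, Submodule.Quotient.mk_eq_zero] at hvac
  simpa [wordCount] using serreSubmodule_le_ker_wordCount hvac

end WordModule

section LieWords

variable {ι : Type*}

/-- The height of an element of the root lattice, written in the basis of simple roots. -/
def height [Fintype ι] (n : ι → ℤ) : ℤ := ∑ i, n i

theorem height_add [Fintype ι] (m n : ι → ℤ) : height (m + n) = height m + height n :=
  Finset.sum_add_distrib

theorem height_sub [Fintype ι] (m n : ι → ℤ) : height (m - n) = height m - height n :=
  Finset.sum_sub_distrib _ _

theorem height_single [Fintype ι] [DecidableEq ι] (i : ι) (k : ℤ) : height (Pi.single i k) = k :=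
  Fintype.sum_pi_single' i k

theorem height_pos [Fintype ι] {n : ι → ℤ} (hn : 0 < n) : 0 < height n :=
  Fintype.sum_pos hn

variable [DecidableEq ι]

theorem single_one_pos (i : ι) : (0 : ι → ℤ) < Pi.single i 1 :=
  Pi.single_pos.2 zero_lt_one

variable {L : Type*} [LieRing L] {e : ι → L}

/-- `IsLieWord e n x` says that `x` is a right-normed bracket of the `e i` of weight `n`. -/
inductive IsLieWord (e : ι → L) : (ι → ℤ) → L → Prop
  | gen (i : ι) : IsLieWord e (Pi.single i 1) (e i)
  | lie (i : ι) {n : ι → ℤ} {x : L} (hx : IsLieWord e n x) :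
    IsLieWord e (Pi.single i 1 + n) ⁅e i, x⁆

namespace IsLieWord

theorem pos {n : ι → ℤ} {x : L} (w : IsLieWord e n x) : 0 < n := by
  induction w with
  | gen i => exact single_one_pos i
  | lie i _ ih => exact add_pos (single_one_pos i) ih

theorem eq_of_single {i : ι} {k : ℤ} {x : L} (w : IsLieWord e (Pi.single i k) x) :
    x = 0 ∨ k = 1 ∧ x = e i := by
  generalize hn : (Pi.single i k : ι → ℤ) = n at w
  induction w generalizing k with
  | gen j =>
    obtain rfl : i = j := by
      by_contra hij
      simpa [Pi.single_apply, Ne.symm hij] using congrFun hn j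
    exact .inr ⟨by simpa using congrFun hn i, rfl⟩
  | @lie j n x w ih =>
    obtain rfl : i = j := by
      by_contra hij
      have hneg : 0 = 1 + n j := by simpa [Ne.symm hij] using congrFun hn j
      have hnonneg : 0 ≤ n j := w.pos.le j
      lia
    rcases ih (k := k - 1) (by rw [Pi.single_sub, hn, add_sub_cancel_left]) with rfl | ⟨-, rfl⟩
    · simp
    · simp

theorem finite_setOf [Finite ι] (e : ι → L) (n : ι → ℤ) : {x | IsLieWord e n x}.Finite := by
  have := Fintype.ofFinite ι
  obtain ⟨k, hk⟩ : ∃ k : ℕ, height n ≤ k := ⟨_, Int.self_le_toNat _⟩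
  induction k generalizing n with
  | zero =>
    refine Set.finite_empty.subset fun x w ↦ ?_
    exact absurd (height_pos w.pos) (by simpa using hk)
  | succ k ih =>
    have hfin (i : ι) : {x | IsLieWord e (n - Pi.single i 1) x}.Finite :=
      ih _ (by rw [height_sub, height_single]; push_cast at hk; lia)
    refine ((Set.finite_range e).union (Set.finite_iUnion fun i ↦ (hfin i).image (⁅e i, ·⁆))).subset
      fun x w ↦ ?_
    cases w with
    | gen i => exact .inl ⟨i, rfl⟩
    | lie i w => exact .inr (Set.mem_iUnion.2 ⟨i, _, by simpa using w, rfl⟩)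

end IsLieWord

end LieWords

section Weights

open Matrix

variable {ι L : Type*} [Fintype ι] [LieRing L] [LieAlgebra ℚ L] {A : Matrix ι ι ℤ}
  {h e f : ι → L}

variable (A h) in
/-- The simultaneous eigenspace of the operators `ad (h i)` attached to the element `n` of the root
lattice, of which `rootSpace` is the case of the generators of `g(A)`. -/
def weightSpace (n : ι → ℤ) : Submodule ℚ L :=
  ⨅ i, Module.End.eigenspace (LieAlgebra.ad ℚ L (h i)) ((∑ j, A i j * n j : ℤ) : ℚ)

theorem mem_weightSpace {n : ι → ℤ} {x : L} :
    x ∈ weightSpace A h n ↔ ∀ i, ⁅h i, x⁆ = ((A *ᵥ n) i : ℚ) • x := by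
  simp [weightSpace, Submodule.mem_iInf, mulVec, dotProduct]

theorem weightSpace_neg_left (n : ι → ℤ) : weightSpace A (-h) n = weightSpace A h (-n) := by
  ext x
  simp only [mem_weightSpace, mulVec_neg, Pi.neg_apply, neg_lie, Int.cast_neg, neg_smul,
    neg_eq_iff_eq_neg]

theorem lie_mem_weightSpace {m n : ι → ℤ} {x y : L} (hx : x ∈ weightSpace A h m)
    (hy : y ∈ weightSpace A h n) : ⁅x, y⁆ ∈ weightSpace A h (m + n) := by
  refine mem_weightSpace.2 fun i ↦ ?_
  rw [mulVec_add, Pi.add_apply, Int.cast_add,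
    lie_lie_eq_smul (mem_weightSpace.1 hx i) (mem_weightSpace.1 hy i)]

theorem ad_pow_mem_weightSpace {m n : ι → ℤ} {x y : L} (hx : x ∈ weightSpace A h m)
    (hy : y ∈ weightSpace A h n) (k : ℕ) :
    ((LieAlgebra.ad ℚ L x) ^ k) y ∈ weightSpace A h (k • m + n) := by
  induction k with
  | zero => simpa using hy
  | succ k ih =>
    rw [pow_succ', succ_nsmul', add_assoc]
    exact lie_mem_weightSpace hx ih

theorem iSupIndep_weightSpace (hinj : Function.Injective A.mulVec)
    (hh : ∀ i j, ⁅h i, h j⁆ = 0) : iSupIndep (weightSpace A h) := by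
  have hcomm (i j : ι) : Commute (LieAlgebra.ad ℚ L (h i)) (LieAlgebra.ad ℚ L (h j)) := by
    refine LinearMap.ext fun x ↦ ?_
    simp [leibniz_lie (h i), hh]
  have hindep := Module.End.independent_iInf_maxGenEigenspace_of_forall_mapsTo
    (fun i ↦ LieAlgebra.ad ℚ L (h i))
    fun i j μ ↦ Module.End.mapsTo_maxGenEigenspace_of_comm (hcomm j i) μ
  have hcast : Function.Injective fun (n : ι → ℤ) (i : ι) ↦ (((A *ᵥ n) i : ℤ) : ℚ) :=
    fun m n hmn ↦ hinj (funext fun i ↦ Int.cast_injective (congrFun hmn i))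
  exact (hindep.comp hcast).mono fun n ↦ le_iInf fun i ↦ iInf_le_of_le i
    ((Module.End.genEigenspace _ _).monotone le_top)

theorem IsChevalleySystem.h_mem_weightSpace (c : IsChevalleySystem A h e f) (i : ι) :
    h i ∈ weightSpace A h 0 :=
  mem_weightSpace.2 fun j ↦ by simp [c.lie_h_h]

variable [DecidableEq ι]

theorem IsChevalleySystem.e_mem_weightSpace (c : IsChevalleySystem A h e f) (i : ι) :
    e i ∈ weightSpace A h (Pi.single i 1) :=
  mem_weightSpace.2 fun j ↦ by simp [c.lie_h_e]

theorem IsChevalleySystem.f_mem_weightSpace (c : IsChevalleySystem A h e f) (i : ι) :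
    f i ∈ weightSpace A h (-Pi.single i 1) :=
  weightSpace_neg_left (A := A) (h := h) _ ▸ c.swap.e_mem_weightSpace i

theorem IsLieWord.mem_weightSpace (c : IsChevalleySystem A h e f) {n : ι → ℤ} {x : L}
    (w : IsLieWord e n x) : x ∈ weightSpace A h n := by
  induction w with
  | gen i => exact c.e_mem_weightSpace i
  | lie i _ ih => exact lie_mem_weightSpace (c.e_mem_weightSpace i) ih

end Weights

section TriangularDecomposition

open Matrix

theorem eq_top_of_lie_mem {R L : Type*} [CommRing R] [LieRing L] [LieAlgebra R L] {s : Set L}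
    (hs : LieSubalgebra.lieSpan R L s = ⊤) {T : Submodule R L} (hsT : s ⊆ T)
    (hT : ∀ g ∈ s, ∀ x ∈ T, ⁅g, x⁆ ∈ T) : T = ⊤ := by
  have hmem (y : L) : y ∈ LieSubalgebra.lieSpan R L s := hs ▸ LieSubalgebra.mem_top y
  have hstable (y : L) : ∀ x ∈ T, ⁅y, x⁆ ∈ T := by
    induction hmem y using LieSubalgebra.lieSpan_induction with
    | mem g hg => exact hT g hg
    | zero => simp
    | add y z _ _ hy hz => exact fun x hx ↦ add_lie y z x ▸ add_mem (hy x hx) (hz x hx)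
    | smul a y _ hy => exact fun x hx ↦ smul_lie a y x ▸ T.smul_mem a (hy x hx)
    | lie y z _ _ hy hz =>
      exact fun x hx ↦ lie_lie y z x ▸ sub_mem (hy _ (hz x hx)) (hz _ (hy x hx))
  refine Submodule.eq_top_iff'.2 fun y ↦ ?_
  induction hmem y using LieSubalgebra.lieSpan_induction with
  | mem g hg => exact hsT hg
  | zero => exact zero_mem T
  | add _ _ _ _ hy hz => exact add_mem hy hz
  | smul a _ _ hy => exact T.smul_mem a hy
  | lie y z _ _ _ hz => exact hstable y z hz

theorem lie_mem_of_mem_span {R L : Type*} [CommRing R] [LieRing L] [LieAlgebra R L] {s : Set L}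
    {T : Submodule R L} {y : L} (hs : ∀ x ∈ s, ⁅y, x⁆ ∈ T) {x : L}
    (hx : x ∈ Submodule.span R s) : ⁅y, x⁆ ∈ T :=
  (Submodule.span_le (p := T.comap (LieAlgebra.ad R L y : L →ₗ[R] L))).2 hs hx

variable {ι L : Type*} [LieRing L] [LieAlgebra ℚ L] {A : Matrix ι ι ℤ}
  {h e f : ι → L}

/-- The Chevalley–Serre relations together with generation, so that `L` is a quotient of `g(A)`.
Unlike the standard generators of `g(A)` themselves, this notion is stable under the Chevalley
involution. -/
structure IsKacMoodySystem (A : Matrix ι ι ℤ) (h e f : ι → L) : Prop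
    extends IsChevalleySerreSystem A h e f where
  lieSpan_eq_top :
    LieSubalgebra.lieSpan ℚ L (Set.range h ∪ Set.range e ∪ Set.range f) = ⊤

theorem isKacMoodySystem_generators [DecidableEq ι] : IsKacMoodySystem A (gH A) (gE A) (gF A) where
  toIsChevalleySerreSystem := isChevalleySerreSystem_generators
  lieSpan_eq_top := lieSpan_generators_eq_top

theorem IsKacMoodySystem.swap (c : IsKacMoodySystem A h e f) : IsKacMoodySystem A (-h) f e where
  toIsChevalleySystem := c.toIsChevalleySystem.swap
  serre_e := c.serre_f
  serre_f := c.serre_e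
  lieSpan_eq_top := by
    rw [← c.lieSpan_eq_top, Set.union_right_comm, ← Set.neg_range',
      LieSubalgebra.span_union, LieSubalgebra.span_union, LieSubalgebra.span_union,
      LieSubalgebra.span_union, LieSubalgebra.lieSpan_neg]

variable [DecidableEq ι]

/-- The span of all right-normed words in the `e i`. For the generators of `g(A)` this is the
positive part of the triangular decomposition. -/
def lieWordSpan (e : ι → L) : Submodule ℚ L := Submodule.span ℚ {x | ∃ n, IsLieWord e n x}

theorem IsLieWord.mem_lieWordSpan {n : ι → ℤ} {x : L} (w : IsLieWord e n x) : x ∈ lieWordSpan e :=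
  Submodule.subset_span ⟨n, w⟩

theorem lie_mem_lieWordSpan (i : ι) {x : L} (hx : x ∈ lieWordSpan e) : ⁅e i, x⁆ ∈ lieWordSpan e :=
  lie_mem_of_mem_span (by rintro _ ⟨_, w⟩; exact (w.lie i).mem_lieWordSpan) hx

namespace IsChevalleySystem

theorem lie_e_mem_of_mem_borel (c : IsChevalleySystem A h e f) (i : ι) {x : L}
    (hx : x ∈ Submodule.span ℚ (Set.range h) ⊔ lieWordSpan e) : ⁅e i, x⁆ ∈ lieWordSpan e := by
  obtain ⟨y, hy, z, hz, rfl⟩ := Submodule.mem_sup.1 hx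
  rw [lie_add]
  refine add_mem (lie_mem_of_mem_span ?_ hy) (lie_mem_lieWordSpan i hz)
  rintro _ ⟨j, rfl⟩
  rw [c.lie_e_h]
  exact neg_mem (Submodule.smul_mem _ _ (IsLieWord.gen i).mem_lieWordSpan)

theorem exists_lie_h_word_eq_smul (c : IsChevalleySystem A h e f) (i : ι) {n : ι → ℤ} {x : L}
    (w : IsLieWord e n x) : ∃ t : ℚ, ⁅h i, x⁆ = t • x := by
  induction w with
  | gen j => exact ⟨_, c.lie_h_e i j⟩
  | lie j _ ih => exact ih.imp' _ fun _ ↦ lie_lie_eq_smul (c.lie_h_e i j)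

theorem lie_h_mem_lieWordSpan (c : IsChevalleySystem A h e f) (i : ι) {x : L}
    (hx : x ∈ lieWordSpan e) : ⁅h i, x⁆ ∈ lieWordSpan e := by
  refine lie_mem_of_mem_span ?_ hx
  rintro y ⟨n, w⟩
  obtain ⟨t, ht⟩ := c.exists_lie_h_word_eq_smul i w
  rw [ht]
  exact Submodule.smul_mem _ t w.mem_lieWordSpan

theorem lie_f_mem_of_mem_lieWordSpan (c : IsChevalleySystem A h e f) (i : ι) {x : L}
    (hx : x ∈ lieWordSpan e) : ⁅f i, x⁆ ∈ Submodule.span ℚ (Set.range h) ⊔ lieWordSpan e := by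
  have hcartan (j : ι) : h j ∈ Submodule.span ℚ (Set.range h) := Submodule.subset_span ⟨j, rfl⟩
  refine lie_mem_of_mem_span ?_ hx
  rintro y ⟨n, w⟩
  induction w with
  | gen j =>
    rcases eq_or_ne i j with rfl | hij
    · rw [c.lie_f_e_self]
      exact neg_mem (Submodule.mem_sup_left (hcartan i))
    · rw [c.lie_f_e_of_ne hij]
      exact zero_mem _
  | @lie j n y w ih =>
    rw [leibniz_lie]
    refine add_mem (Submodule.mem_sup_right ?_)
      (Submodule.mem_sup_right (c.lie_e_mem_of_mem_borel j ih))
    rcases eq_or_ne i j with rfl | hij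
    · rw [c.lie_f_e_self, neg_lie]
      exact neg_mem (c.lie_h_mem_lieWordSpan i w.mem_lieWordSpan)
    · rw [c.lie_f_e_of_ne hij, zero_lie]
      exact zero_mem _

end IsChevalleySystem

theorem IsKacMoodySystem.span_range_sup_lieWordSpan_eq_top (c : IsKacMoodySystem A h e f) :
    Submodule.span ℚ (Set.range h) ⊔ lieWordSpan e ⊔ lieWordSpan f = ⊤ := by
  refine eq_top_of_lie_mem c.lieSpan_eq_top ?_ ?_
  · rw [Set.union_subset_iff, Set.union_subset_iff]
    refine ⟨⟨?_, ?_⟩, ?_⟩ <;> rintro _ ⟨i, rfl⟩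
    · exact Submodule.mem_sup_left (Submodule.mem_sup_left (Submodule.subset_span ⟨i, rfl⟩))
    · exact Submodule.mem_sup_left (Submodule.mem_sup_right (IsLieWord.gen i).mem_lieWordSpan)
    · exact Submodule.mem_sup_right (IsLieWord.gen i).mem_lieWordSpan
  have hf (i : ι) {x : L} (hx : x ∈ Submodule.span ℚ (Set.range (-h)) ⊔ lieWordSpan f) :=
    c.swap.lie_e_mem_of_mem_borel i hx
  have hef (i : ι) {x : L} (hx : x ∈ lieWordSpan f) := c.swap.lie_f_mem_of_mem_lieWordSpan i hx
  simp only [← Set.neg_range', Submodule.span_neg] at hf hef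
  rintro _ ((⟨i, rfl⟩ | ⟨i, rfl⟩) | ⟨i, rfl⟩) x hx <;>
    obtain ⟨y, hy, z, hz, rfl⟩ := Submodule.mem_sup.1 hx <;> rw [lie_add]
  · refine add_mem (Submodule.mem_sup_left ?_) (Submodule.mem_sup_right ?_)
    · obtain ⟨u, hu, v, hv, rfl⟩ := Submodule.mem_sup.1 hy
      rw [lie_add]
      refine Submodule.mem_sup_right (add_mem (lie_mem_of_mem_span ?_ hu)
        (c.lie_h_mem_lieWordSpan i hv))
      rintro _ ⟨j, rfl⟩
      exact c.lie_h_h i j ▸ zero_mem _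
    · simpa using neg_mem (c.swap.lie_h_mem_lieWordSpan i hz)
  · refine add_mem
      (Submodule.mem_sup_left (Submodule.mem_sup_right (c.lie_e_mem_of_mem_borel i hy))) ?_
    exact SetLike.le_def.1 (sup_le_sup_right le_sup_left _) (hef i hz)
  · obtain ⟨u, hu, v, hv, rfl⟩ := Submodule.mem_sup.1 hy
    rw [lie_add, add_right_comm]
    refine add_mem (Submodule.mem_sup_right ?_) (Submodule.mem_sup_left ?_)
    · rw [← lie_add]
      exact hf i (add_mem (Submodule.mem_sup_left hu) (Submodule.mem_sup_right hz))
    · exact c.lie_f_mem_of_mem_lieWordSpan i hv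

end TriangularDecomposition

section Multiplicities

open Matrix

theorem eq_of_iSupIndep_of_le {α κ : Type*} [CompleteLattice α] [IsModularLattice α]
    {s t : κ → α} (ht : iSupIndep t) (hst : s ≤ t) (hs : ⨆ k, s k = ⊤) : s = t := by
  refine funext fun k ↦ (hst k).antisymm ?_
  have htop : s k ⊔ ⨆ (j) (_ : j ≠ k), t j = ⊤ :=
    top_le_iff.1 <| hs ▸ (iSup_split_single s k).trans_le
      (sup_le_sup_left (iSup₂_mono fun j _ ↦ hst j) _)
  calc t k = (s k ⊔ ⨆ (j) (_ : j ≠ k), t j) ⊓ t k := by rw [htop, top_inf_eq]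
    _ = s k ⊔ (⨆ (j) (_ : j ≠ k), t j) ⊓ t k := sup_inf_assoc_of_le _ (hst k)
    _ ≤ s k := by rw [inf_comm, (ht k).eq_bot, sup_bot_eq]

variable {ι L : Type*} [DecidableEq ι] [LieRing L] {h e f : ι → L}

/-- The generators `h i` and the words in the `e i` or in the `f i`, sorted by weight. -/
def weightGenerators (h e f : ι → L) (n : ι → ℤ) : Set L :=
  {x | n = 0 ∧ x ∈ Set.range h} ∪ {x | IsLieWord e n x} ∪ {x | IsLieWord f (-n) x}

theorem finite_weightGenerators [Finite ι] (h e f : ι → L) (n : ι → ℤ) :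
    (weightGenerators h e f n).Finite :=
  (((Set.finite_range h).subset fun _ hx ↦ hx.2).union (IsLieWord.finite_setOf e n)).union
    (IsLieWord.finite_setOf f (-n))

theorem weightGenerators_of_pos {n : ι → ℤ} (hn : 0 < n) :
    weightGenerators h e f n = {x | IsLieWord e n x} := by
  ext x
  constructor
  · rintro ((⟨rfl, -⟩ | w) | w)
    · exact absurd hn (lt_irrefl _)
    · exact w
    · exact absurd (neg_pos.1 w.pos) hn.asymm
  · exact fun w ↦ .inl (.inr w)

theorem weightGenerators_of_not_nonneg {n : ι → ℤ} (hn : ¬0 ≤ n) (hn' : ¬n ≤ 0) :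
    weightGenerators h e f n = ∅ := by
  refine Set.eq_empty_of_forall_notMem ?_
  rintro x ((⟨rfl, -⟩ | w) | w)
  · exact hn le_rfl
  · exact hn w.pos.le
  · exact hn' (neg_nonneg.1 w.pos.le)

variable [LieAlgebra ℚ L]

theorem IsKacMoodySystem.iSup_span_weightGenerators {A : Matrix ι ι ℤ}
    (c : IsKacMoodySystem A h e f) : ⨆ n, Submodule.span ℚ (weightGenerators h e f n) = ⊤ := by
  rw [← top_le_iff, ← c.span_range_sup_lieWordSpan_eq_top, ← Submodule.span_iUnion]
  refine sup_le (sup_le ?_ ?_) ?_ <;> refine Submodule.span_mono ?_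
  · exact fun x hx ↦ Set.mem_iUnion.2 ⟨0, .inl (.inl ⟨rfl, hx⟩)⟩
  · exact fun x ⟨n, w⟩ ↦ Set.mem_iUnion.2 ⟨n, .inl (.inr w)⟩
  · exact fun x ⟨n, w⟩ ↦ Set.mem_iUnion.2 ⟨-n, .inr (by simpa using w)⟩

variable [Fintype ι] {A : Matrix ι ι ℤ}

theorem IsChevalleySystem.span_weightGenerators_le (c : IsChevalleySystem A h e f) (n : ι → ℤ) :
    Submodule.span ℚ (weightGenerators h e f n) ≤ weightSpace A h n := by
  refine Submodule.span_le.2 ?_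
  rintro x ((⟨rfl, i, rfl⟩ | w) | w)
  · exact c.h_mem_weightSpace i
  · exact w.mem_weightSpace c
  · simpa [weightSpace_neg_left] using w.mem_weightSpace c.swap

namespace IsKacMoodySystem

theorem weightSpace_eq_span (c : IsKacMoodySystem A h e f) (hinj : Function.Injective A.mulVec)
    (n : ι → ℤ) : weightSpace A h n = Submodule.span ℚ (weightGenerators h e f n) :=
  (congrFun (eq_of_iSupIndep_of_le (iSupIndep_weightSpace hinj c.lie_h_h)
    c.span_weightGenerators_le c.iSup_span_weightGenerators) n).symm

end IsKacMoodySystem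

end Multiplicities

theorem IsKacMoodySystem.finiteDimensional_weightSpace {ι L : Type*} [Fintype ι] [LieRing L]
    [LieAlgebra ℚ L] {A : Matrix ι ι ℤ} {h e f : ι → L} (c : IsKacMoodySystem A h e f)
    (hinj : Function.Injective A.mulVec) (n : ι → ℤ) :
    FiniteDimensional ℚ (weightSpace A h n) := by
  classical
  exact c.weightSpace_eq_span hinj n ▸ .span_of_finite ℚ (finite_weightGenerators h e f n)

section Reflection

attribute [local instance] LieRing.ofAssociativeRing

open Matrix

section SlTwo

variable {V : Type*} [AddCommGroup V] [Module ℚ V] {E F H : Module.End ℚ V}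

theorem apply_pow_succ_of_sl2 (hEF : ⁅E, F⁆ = H) (hHF : ⁅H, F⁆ = -(2 : ℚ) • F) {μ : ℚ} {v : V}
    (hv : H v = μ • v) (n : ℕ) :
    E ((F ^ (n + 1)) v) = (F ^ (n + 1)) (E v) + ((n + 1) * (μ - n)) • (F ^ n) v := by
  have hH (n : ℕ) : H ((F ^ n) v) = (μ - 2 * n) • (F ^ n) v := by
    induction n with
    | zero => simp [hv]
    | succ n ih =>
      rw [pow_succ', Module.End.mul_apply, apply_apply_eq_of_lie_eq hHF, ih, map_smul,
        LinearMap.smul_apply]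
      push_cast
      module
  induction n with
  | zero => simp [apply_apply_eq_of_lie_eq hEF, hv, add_comm]
  | succ n ih =>
    rw [pow_succ' F (n + 1), Module.End.mul_apply, apply_apply_eq_of_lie_eq hEF, hH, ih, map_add,
      map_smul, Module.End.mul_apply, ← Module.End.mul_apply F (F ^ n), ← pow_succ']
    push_cast
    module

theorem eq_zero_of_pow_apply_eq_zero_of_sl2 (hEF : ⁅E, F⁆ = H) (hHE : ⁅H, E⁆ = (2 : ℚ) • E)
    (hHF : ⁅H, F⁆ = -(2 : ℚ) • F) {m r : ℕ} {v : V} (hv : H v = (m : ℚ) • v)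
    (hE : (E ^ r) v = 0) (hF : (F ^ m) v = 0) : v = 0 := by
  induction r generalizing m v with
  | zero => simpa using hE
  | succ r ih =>
    have hF' (k : ℕ) : (F ^ (k + m)) v = 0 := by
      rw [pow_add, Module.End.mul_apply, hF, map_zero]
    have hEv : E v = 0 := by
      refine ih (m := m + 2) ?_ ?_ ?_
      · rw [apply_apply_eq_of_lie_eq hHE, hv, map_smul, LinearMap.smul_apply]
        push_cast
        module
      · rwa [← Module.End.mul_apply, ← pow_succ]
      · have hpow := apply_pow_succ_of_sl2 hEF hHF hv (m + 1)
        rw [add_comm m 1, hF' 1, show 1 + m + 1 = 2 + m by lia, hF' 2] at hpow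
        simpa [add_comm m 2] using hpow.symm
    have hdown (k : ℕ) (hk : k ≤ m) : (F ^ (m - k)) v = 0 := by
      induction k with
      | zero => simpa using hF
      | succ k ihk =>
        have hpow := apply_pow_succ_of_sl2 hEF hHF hv (m - (k + 1))
        rw [show m - (k + 1) + 1 = m - k by lia, ihk (by lia), hEv, map_zero, map_zero, zero_add,
          eq_comm, Nat.cast_sub hk, smul_eq_zero] at hpow
        refine hpow.resolve_left (mul_ne_zero ?_ ?_)
        · rw [← Nat.cast_sub hk]
          positivity
        · push_cast
          rw [sub_sub_cancel]
          positivity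
    simpa using hdown m le_rfl

end SlTwo

variable {ι L : Type*} [LieRing L] [LieAlgebra ℚ L] {A : Matrix ι ι ℤ} {h e f : ι → L}

namespace IsKacMoodySystem

theorem exists_ad_e_pow_eq_zero (c : IsKacMoodySystem A h e f) (i : ι) (x : L) :
    ∃ r, ((LieAlgebra.ad ℚ L (e i)) ^ r) x = 0 := by
  suffices hspan : LieSubalgebra.lieSpan ℚ L (Set.range h ∪ Set.range e ∪ Set.range f) ≤
      LieSubalgebra.engel ℚ (e i) from
    (LieSubalgebra.mem_engel_iff _ _ _).1 (hspan (c.lieSpan_eq_top ▸ LieSubalgebra.mem_top x))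
  refine LieSubalgebra.lieSpan_le.2 ?_
  rintro _ ((⟨j, rfl⟩ | ⟨j, rfl⟩) | ⟨j, rfl⟩) <;>
    refine (LieSubalgebra.mem_engel_iff _ _ _).2 ?_
  · exact ⟨2, by simp [pow_succ, c.lie_e_h]⟩
  · exact ⟨(-A i j).toNat + 1, by simp [pow_succ, c.serre_e i j]⟩
  · rcases eq_or_ne i j with rfl | hij
    · exact ⟨3, by simp [pow_succ, c.lie_e_f_self, c.lie_e_h]⟩
    · exact ⟨1, by simp [c.lie_e_f_of_ne i j hij]⟩

theorem eq_zero_of_ad_f_pow_eq_zero (c : IsKacMoodySystem A h e f) {i : ι} (hi : A i i = 2)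
    {m : ℕ} {x : L} (hx : ⁅h i, x⁆ = (m : ℚ) • x)
    (hf : ((LieAlgebra.ad ℚ L (f i)) ^ m) x = 0) : x = 0 := by
  obtain ⟨r, he⟩ := c.exists_ad_e_pow_eq_zero i x
  refine eq_zero_of_pow_apply_eq_zero_of_sl2 (E := LieAlgebra.ad ℚ L (e i))
    (H := LieAlgebra.ad ℚ L (h i)) ?_ ?_ ?_ hx he hf
  · rw [← LieHom.map_lie, c.lie_e_f_self]
  · rw [← LieHom.map_lie, c.lie_h_e, hi, map_smul, Int.cast_ofNat]
  · rw [← LieHom.map_lie, c.lie_h_f, hi, map_neg, map_smul, neg_smul, Int.cast_ofNat]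

end IsKacMoodySystem

variable [Fintype ι] [DecidableEq ι]

variable (A) in
/-- The simple reflection of the root lattice attached to the node `i`. -/
def simpleReflection (i : ι) (n : ι → ℤ) : ι → ℤ := n - Pi.single i ((A *ᵥ n) i)

theorem mulVec_simpleReflection_apply_self {i : ι} (hi : A i i = 2) (n : ι → ℤ) :
    (A *ᵥ simpleReflection A i n) i = -(A *ᵥ n) i := by
  rw [simpleReflection, mulVec_sub, Pi.sub_apply, mulVec_single, Pi.smul_apply, col_apply, hi,
    MulOpposite.smul_eq_mul_unop, MulOpposite.unop_op]
  ring

theorem simpleReflection_simpleReflection {i : ι} (hi : A i i = 2) (n : ι → ℤ) :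
    simpleReflection A i (simpleReflection A i n) = n := by
  rw [simpleReflection, mulVec_simpleReflection_apply_self hi, Pi.single_neg, sub_neg_eq_add,
    simpleReflection, sub_add_cancel]

theorem simpleReflection_neg (i : ι) (n : ι → ℤ) :
    simpleReflection A i (-n) = -simpleReflection A i n := by
  simp only [simpleReflection, mulVec_neg, Pi.neg_apply, Pi.single_neg]
  abel

theorem IsKacMoodySystem.finrank_weightSpace_le_simpleReflection (c : IsKacMoodySystem A h e f)
    (hinj : Function.Injective A.mulVec) {i : ι} (hi : A i i = 2) {n : ι → ℤ}
    (hn : 0 ≤ (A *ᵥ n) i) :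
    Module.finrank ℚ (weightSpace A h n) ≤
      Module.finrank ℚ (weightSpace A h (simpleReflection A i n)) := by
  have := c.finiteDimensional_weightSpace hinj
  obtain ⟨m, hm⟩ := Int.eq_ofNat_of_zero_le hn
  have hmaps : ∀ x ∈ weightSpace A h n,
      ((LieAlgebra.ad ℚ L (f i)) ^ m) x ∈ weightSpace A h (simpleReflection A i n) := by
    intro x hx
    have hweight : m • -Pi.single i 1 + n = simpleReflection A i n := by
      rw [simpleReflection, hm, smul_neg, ← Pi.single_smul, nsmul_one]
      exact neg_add_eq_sub _ _
    exact hweight ▸ ad_pow_mem_weightSpace (c.f_mem_weightSpace i) hx m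
  refine LinearMap.finrank_le_finrank_of_injective
    (f := ((LieAlgebra.ad ℚ L (f i)) ^ m).restrict hmaps)
    ((injective_iff_map_eq_zero _).2 ?_)
  rintro ⟨x, hx⟩ hx'
  refine Subtype.ext (c.eq_zero_of_ad_f_pow_eq_zero hi ?_ (congrArg Subtype.val hx'))
  simpa [hm] using mem_weightSpace.1 hx i

theorem rootMult_simpleReflection (hinj : Function.Injective A.mulVec) {i : ι} (hi : A i i = 2)
    (n : ι → ℤ) : rootMult A (simpleReflection A i n) = rootMult A n := by
  have c := isKacMoodySystem_generators (A := A)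
  wlog hn : 0 ≤ (A *ᵥ n) i generalizing n
  · rw [← this (simpleReflection A i n), simpleReflection_simpleReflection hi]
    rw [mulVec_simpleReflection_apply_self hi]
    lia
  refine le_antisymm ?_ (c.finrank_weightSpace_le_simpleReflection hinj hi hn)
  have hswap := c.swap.finrank_weightSpace_le_simpleReflection hinj hi
    (n := -simpleReflection A i n) (by
      rwa [mulVec_neg, Pi.neg_apply, mulVec_simpleReflection_apply_self hi, neg_neg])
  rwa [simpleReflection_neg, simpleReflection_simpleReflection hi, weightSpace_neg_left,
    weightSpace_neg_left, neg_neg, neg_neg] at hswap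

end Reflection

section RootMult

open Matrix

variable {ι : Type*} [Fintype ι] [DecidableEq ι] {A : Matrix ι ι ℤ}

theorem rootSpace_eq_span (hinj : Function.Injective A.mulVec) {n : ι → ℤ} (hn : 0 < n) :
    rootSpace A n = Submodule.span ℚ {x | IsLieWord (gE A) n x} := by
  rw [← weightGenerators_of_pos hn (h := gH A) (f := gF A)]
  exact isKacMoodySystem_generators.weightSpace_eq_span hinj n

theorem finiteDimensional_rootSpace (hinj : Function.Injective A.mulVec) (n : ι → ℤ) :
    FiniteDimensional ℚ (rootSpace A n) :=
  isKacMoodySystem_generators.finiteDimensional_weightSpace hinj n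

theorem rootMult_of_not_nonneg (hinj : Function.Injective A.mulVec) {n : ι → ℤ} (hn : ¬0 ≤ n)
    (hn' : ¬n ≤ 0) : rootMult A n = 0 := by
  have hbot := isKacMoodySystem_generators.weightSpace_eq_span hinj n
  rw [weightGenerators_of_not_nonneg hn hn', Submodule.span_empty] at hbot
  exact (congrArg (fun S : Submodule ℚ (Matrix.ToLieAlgebra ℚ A) ↦ Module.finrank ℚ S) hbot).trans
    (finrank_bot ℚ _)

theorem rootMult_single_one (hinj : Function.Injective A.mulVec) (hA : IsSymmSimplyLaced A)
    (i : ι) : rootMult A (Pi.single i 1) = 1 := by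
  have hspan : Submodule.span ℚ {x | IsLieWord (gE A) (Pi.single i 1) x} = ℚ ∙ gE A i := by
    refine le_antisymm (Submodule.span_le.2 fun x w ↦ ?_)
      (Submodule.span_mono (Set.singleton_subset_iff.2 (.gen i)))
    rcases IsLieWord.eq_of_single w with rfl | ⟨-, rfl⟩
    exacts [zero_mem _, Submodule.mem_span_singleton_self _]
  rw [rootMult, rootSpace_eq_span hinj (single_one_pos i), hspan,
    finrank_span_singleton (gE_ne_zero hA i)]

theorem rootMult_single_of_one_lt (hinj : Function.Injective A.mulVec) (i : ι) {k : ℤ}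
    (hk : 1 < k) : rootMult A (Pi.single i k) = 0 := by
  rw [rootMult, rootSpace_eq_span hinj (Pi.single_pos.2 (zero_lt_one.trans hk))]
  suffices Submodule.span ℚ {x | IsLieWord (gE A) (Pi.single i k) x} = ⊥ by rw [this, finrank_bot]
  refine Submodule.span_eq_bot.2 fun x w ↦ ?_
  exact (IsLieWord.eq_of_single w).resolve_right fun h ↦ hk.ne' h.1

end RootMult

section ReducedCobracket

open Matrix
open scoped TensorProduct

variable {ι : Type*} [DecidableEq ι] {A : Matrix ι ι ℤ}

/-- A `1`-cocycle of `g(A)` with values in `g(A) ⊗ g(A)` that extends the standard Lie cobracket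
`gE A i ↦ gE A i ∧ gH A i` of the positive Borel subalgebra. -/
def cobracket (hA : IsSymmSimplyLaced A) :
    Matrix.ToLieAlgebra ℚ A →ₗ[ℚ] Matrix.ToLieAlgebra ℚ A ⊗[ℚ] Matrix.ToLieAlgebra ℚ A :=
  (exists_cobracket hA).choose

theorem cobracket_lie (hA : IsSymmSimplyLaced A) (x y : Matrix.ToLieAlgebra ℚ A) :
    cobracket hA ⁅x, y⁆ = ⁅x, cobracket hA y⁆ - ⁅y, cobracket hA x⁆ :=
  (exists_cobracket hA).choose_spec.1 x y

theorem cobracket_gE (hA : IsSymmSimplyLaced A) (i : ι) :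
    cobracket hA (gE A i) = wedge (gE A i) (gH A i) :=
  (exists_cobracket hA).choose_spec.2 i

variable (A) in
/-- The bracket of `g(A)` as an equivariant map on the tensor square. -/
abbrev bracketHom : Matrix.ToLieAlgebra ℚ A ⊗[ℚ] Matrix.ToLieAlgebra ℚ A
    →ₗ⁅ℚ, Matrix.ToLieAlgebra ℚ A⁆ Matrix.ToLieAlgebra ℚ A :=
  LieModule.toModuleHom ℚ _ _

theorem bracketHom_wedge (x y : Matrix.ToLieAlgebra ℚ A) : bracketHom A (wedge x y) = ⁅x, y⁆ := by
  rw [wedge_apply, map_smul, map_sub, LieModule.toModuleHom_apply, LieModule.toModuleHom_apply,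
    ← lie_skew x y]
  module

variable [Fintype ι]

theorem gE_mem_rootSpace (i : ι) : gE A i ∈ rootSpace A (Pi.single i 1) :=
  isKacMoodySystem_generators.e_mem_weightSpace i

theorem lie_mem_rootSpace {m n : ι → ℤ} {x y : Matrix.ToLieAlgebra ℚ A}
    (hx : x ∈ rootSpace A m) (hy : y ∈ rootSpace A n) : ⁅x, y⁆ ∈ rootSpace A (m + n) :=
  lie_mem_weightSpace hx hy

theorem IsLieWord.mem_rootSpace {n : ι → ℤ} {x : Matrix.ToLieAlgebra ℚ A}
    (w : IsLieWord (gE A) n x) : x ∈ rootSpace A n :=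
  w.mem_weightSpace isKacMoodySystem_generators.toIsChevalleySystem

variable (A) in
/-- The element of the Cartan subalgebra corresponding to an element of the root lattice. -/
def coroot (n : ι → ℤ) : Matrix.ToLieAlgebra ℚ A := ∑ i, n i • gH A i

theorem coroot_add (m n : ι → ℤ) : coroot A (m + n) = coroot A m + coroot A n := by
  simp [coroot, add_smul, Finset.sum_add_distrib]

theorem coroot_single_one (i : ι) : coroot A (Pi.single i 1) = gH A i := by
  simp [coroot, Pi.single_apply, ite_smul]

theorem coroot_mem_rootSpace (n : ι → ℤ) : coroot A n ∈ rootSpace A 0 :=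
  sum_mem fun i _ ↦ zsmul_mem (isKacMoodySystem_generators.h_mem_weightSpace i) _

theorem lie_coroot {m n : ι → ℤ} {x : Matrix.ToLieAlgebra ℚ A} (hx : x ∈ rootSpace A n) :
    ⁅x, coroot A m⁆ = -((m ⬝ᵥ A *ᵥ n : ℤ) : ℚ) • x := by
  have hroot (i : ι) : ⁅gH A i, x⁆ = ((A *ᵥ n) i : ℚ) • x := mem_weightSpace.1 hx i
  rw [← lie_skew, coroot, sum_lie]
  simp only [smul_lie, hroot, ← Int.cast_smul_eq_zsmul ℚ, smul_smul, ← Finset.sum_smul,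
    dotProduct, Int.cast_sum, Int.cast_mul, neg_smul]

variable (A) in
/-- The span of the `x ⊗ y` with `x`, `y` in root spaces of positive weights summing to `n`. -/
def positiveTensors (n : ι → ℤ) :
    Submodule ℚ (Matrix.ToLieAlgebra ℚ A ⊗[ℚ] Matrix.ToLieAlgebra ℚ A) :=
  Submodule.span ℚ {u | ∃ a b x y, 0 < a ∧ 0 < b ∧ a + b = n ∧ x ∈ rootSpace A a ∧
    y ∈ rootSpace A b ∧ u = x ⊗ₜ[ℚ] y}

variable {a b m n : ι → ℤ} {x y : Matrix.ToLieAlgebra ℚ A}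

theorem tmul_mem_positiveTensors (ha : 0 < a) (hb : 0 < b) (hab : a + b = n)
    (hx : x ∈ rootSpace A a) (hy : y ∈ rootSpace A b) : x ⊗ₜ[ℚ] y ∈ positiveTensors A n :=
  Submodule.subset_span ⟨a, b, x, y, ha, hb, hab, hx, hy, rfl⟩

theorem wedge_mem_positiveTensors (ha : 0 < a) (hb : 0 < b) (hab : a + b = n)
    (hx : x ∈ rootSpace A a) (hy : y ∈ rootSpace A b) : wedge x y ∈ positiveTensors A n :=
  Submodule.smul_mem _ _ (sub_mem (tmul_mem_positiveTensors ha hb hab hx hy)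
    (tmul_mem_positiveTensors hb ha (add_comm b a ▸ hab) hy hx))

theorem eqOn_positiveTensors {M : Type*} [AddCommGroup M] [Module ℚ M]
    {φ ψ : Matrix.ToLieAlgebra ℚ A ⊗[ℚ] Matrix.ToLieAlgebra ℚ A →ₗ[ℚ] M}
    (hφψ : ∀ a b x y, 0 < a → 0 < b → a + b = n → x ∈ rootSpace A a → y ∈ rootSpace A b →
      φ (x ⊗ₜ y) = ψ (x ⊗ₜ y)) : Set.EqOn φ ψ (positiveTensors A n) := by
  refine LinearMap.eqOn_span ?_
  rintro _ ⟨a, b, x, y, ha, hb, hab, hx, hy, rfl⟩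
  exact hφψ a b x y ha hb hab hx hy

theorem lie_mem_positiveTensors {u} (hm : 0 < m) (hx : x ∈ rootSpace A m)
    (hu : u ∈ positiveTensors A n) : ⁅x, u⁆ ∈ positiveTensors A (m + n) := by
  suffices hle : positiveTensors A n ≤ (positiveTensors A (m + n)).comap
      (LieModule.toEnd ℚ (Matrix.ToLieAlgebra ℚ A) _ x) from hle hu
  refine Submodule.span_le.2 ?_
  rintro _ ⟨a, b, y, z, ha, hb, rfl, hy, hz, rfl⟩
  rw [SetLike.mem_coe, Submodule.mem_comap, LieModule.toEnd_apply_apply,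
    TensorProduct.LieModule.lie_tmul_right]
  exact add_mem
    (tmul_mem_positiveTensors (add_pos hm ha) hb (add_assoc m a b) (lie_mem_rootSpace hx hy) hz)
    (tmul_mem_positiveTensors ha (add_pos hm hb) (add_left_comm a m b) hy (lie_mem_rootSpace hx hz))

/-- The cobracket with its components in `g₀ ⊗ gₙ` and `gₙ ⊗ g₀` removed (on the root space of a
positive `n`). -/
def reducedCobracket (hA : IsSymmSimplyLaced A) (n : ι → ℤ) :
    Matrix.ToLieAlgebra ℚ A →ₗ[ℚ] Matrix.ToLieAlgebra ℚ A ⊗[ℚ] Matrix.ToLieAlgebra ℚ A :=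
  cobracket hA - wedge.flip (coroot A n)

theorem reducedCobracket_apply (hA : IsSymmSimplyLaced A) (n : ι → ℤ)
    (x : Matrix.ToLieAlgebra ℚ A) :
    reducedCobracket hA n x = cobracket hA x - wedge x (coroot A n) := rfl

theorem cobracket_eq_add (hA : IsSymmSimplyLaced A) (n : ι → ℤ) (x : Matrix.ToLieAlgebra ℚ A) :
    cobracket hA x = reducedCobracket hA n x + wedge x (coroot A n) :=
  (sub_add_cancel _ _).symm

theorem reducedCobracket_lie_gE (hA : IsSymmSimplyLaced A) (i : ι) (hx : x ∈ rootSpace A n) :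
    reducedCobracket hA (Pi.single i 1 + n) ⁅gE A i, x⁆ =
      ⁅gE A i, reducedCobracket hA n x⁆ - ((n ⬝ᵥ A *ᵥ Pi.single i 1 : ℤ) : ℚ) • wedge x (gE A i) +
        ((Pi.single i 1 ⬝ᵥ A *ᵥ n : ℤ) : ℚ) • wedge (gE A i) x := by
  have hxe : ⁅x, gE A i⁆ = -⁅gE A i, x⁆ := (lie_skew _ _).symm
  have hxh := lie_coroot (m := Pi.single i 1) hx
  rw [coroot_single_one] at hxh
  rw [reducedCobracket_apply, cobracket_lie, cobracket_eq_add hA n x, cobracket_gE, lie_add,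
    lie_wedge, lie_wedge, lie_coroot (gE_mem_rootSpace i), hxh, hxe, coroot_add,
    coroot_single_one]
  simp only [map_add, map_neg, map_smul, LinearMap.neg_apply]
  module

theorem IsLieWord.reducedCobracket_mem_positiveTensors (hA : IsSymmSimplyLaced A)
    (w : IsLieWord (gE A) n x) : reducedCobracket hA n x ∈ positiveTensors A n := by
  induction w with
  | gen i =>
    rw [reducedCobracket_apply, cobracket_gE, coroot_single_one, sub_self]
    exact zero_mem _
  | lie i w ih =>
    have hpos := single_one_pos i
    rw [reducedCobracket_lie_gE hA i w.mem_rootSpace]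
    refine add_mem (sub_mem (lie_mem_positiveTensors hpos (gE_mem_rootSpace i) ih)
      (Submodule.smul_mem _ _ ?_)) (Submodule.smul_mem _ _ ?_)
    · exact wedge_mem_positiveTensors w.pos hpos (add_comm _ _) w.mem_rootSpace (gE_mem_rootSpace i)
    · exact wedge_mem_positiveTensors hpos w.pos rfl (gE_mem_rootSpace i) w.mem_rootSpace

theorem reducedCobracket_mem_positiveTensors (hA : IsSymmSimplyLaced A)
    (hinj : Function.Injective A.mulVec) (hn : 0 < n) (hx : x ∈ rootSpace A n) :
    reducedCobracket hA n x ∈ positiveTensors A n := by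
  suffices hle : rootSpace A n ≤ (positiveTensors A n).comap (reducedCobracket hA n) from hle hx
  rw [rootSpace_eq_span hinj hn]
  exact Submodule.span_le.2 fun x w ↦ w.reducedCobracket_mem_positiveTensors hA

theorem IsLieWord.bracketHom_cobracket (hA : IsSymmSimplyLaced A) (w : IsLieWord (gE A) n x) :
    bracketHom A (cobracket hA x) = -((2 * height n : ℤ) : ℚ) • x := by
  have hgE (i : ι) : bracketHom A (cobracket hA (gE A i)) = -(2 : ℚ) • gE A i := by
    rw [cobracket_gE, bracketHom_wedge, isKacMoodySystem_generators.lie_e_h, hA.diag, neg_smul,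
      Int.cast_ofNat]
  induction w with
  | gen i => rw [hgE, height_single, mul_one, Int.cast_ofNat]
  | @lie i n x w ih =>
    rw [cobracket_lie, map_sub, LieModuleHom.map_lie, LieModuleHom.map_lie, ih, hgE, lie_smul,
      lie_smul, ← lie_skew x (gE A i), height_add, height_single]
    push_cast
    module

theorem bracketHom_reducedCobracket (hA : IsSymmSimplyLaced A)
    (hinj : Function.Injective A.mulVec) (hn : 0 < n) (hx : x ∈ rootSpace A n) :
    bracketHom A (reducedCobracket hA n x) = ((n ⬝ᵥ A *ᵥ n - 2 * height n : ℤ) : ℚ) • x := by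
  have hcobracket : bracketHom A (cobracket hA x) = -((2 * height n : ℤ) : ℚ) • x := by
    rw [rootSpace_eq_span hinj hn] at hx
    exact LinearMap.eqOn_span (f := (bracketHom A).toLinearMap ∘ₗ cobracket hA)
      (g := -((2 * height n : ℤ) : ℚ) • LinearMap.id)
      (fun x w ↦ IsLieWord.bracketHom_cobracket hA w) hx
  rw [reducedCobracket_apply, map_sub, hcobracket, bracketHom_wedge, lie_coroot hx]
  push_cast
  module

end ReducedCobracket

section RootBasis

open Matrix

variable {ι : Type*} [Fintype ι] [DecidableEq ι] {A : Matrix ι ι ℤ}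

theorem isInternal_rootSpace (hinj : Function.Injective A.mulVec) :
    DirectSum.IsInternal (rootSpace A) := by
  have c := isKacMoodySystem_generators (A := A)
  refine DirectSum.isInternal_submodule_of_iSupIndep_of_iSup_eq_top
    (iSupIndep_weightSpace hinj c.lie_h_h) (top_le_iff.1 ?_)
  rw [← c.iSup_span_weightGenerators]
  exact iSup_mono c.toIsChevalleySystem.span_weightGenerators_le

variable (hinj : Function.Injective A.mulVec) {m n : ι → ℤ} {x : Matrix.ToLieAlgebra ℚ A}

/-- An arbitrary basis of a root space. -/
def rootSpaceBasis (n : ι → ℤ) : Module.Basis (Fin (rootMult A n)) ℚ (rootSpace A n) :=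
  have := finiteDimensional_rootSpace hinj n
  Module.finBasis ℚ (rootSpace A n)

/-- The basis of `g(A)` made of the bases `rootSpaceBasis` of the root spaces. -/
def rootBasis : Module.Basis (Σ n, Fin (rootMult A n)) ℚ (Matrix.ToLieAlgebra ℚ A) :=
  (isInternal_rootSpace hinj).collectedBasis (rootSpaceBasis hinj)

/-- The `i`-th vector of the chosen basis of the root space of `n`. -/
def rootVector (n : ι → ℤ) (i : Fin (rootMult A n)) : Matrix.ToLieAlgebra ℚ A :=
  rootBasis hinj ⟨n, i⟩

/-- The coordinate on `g(A)` dual to `rootVector hinj n i`; it vanishes on the other root spaces. -/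
def rootCovector (n : ι → ℤ) (i : Fin (rootMult A n)) :
    Module.Dual ℚ (Matrix.ToLieAlgebra ℚ A) :=
  (rootBasis hinj).coord ⟨n, i⟩

theorem rootVector_mem (n : ι → ℤ) (i : Fin (rootMult A n)) :
    rootVector hinj n i ∈ rootSpace A n :=
  (isInternal_rootSpace hinj).collectedBasis_mem (rootSpaceBasis hinj) ⟨n, i⟩

theorem rootCovector_rootVector (n : ι → ℤ) (i j : Fin (rootMult A n)) :
    rootCovector hinj n i (rootVector hinj n j) = if i = j then 1 else 0 := by
  simp [rootCovector, rootVector, Finsupp.single_apply, eq_comm]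

theorem rootCovector_of_mem_of_ne (hx : x ∈ rootSpace A m) (hmn : m ≠ n)
    (i : Fin (rootMult A n)) : rootCovector hinj n i x = 0 :=
  (isInternal_rootSpace hinj).collectedBasis_repr_of_mem_ne (rootSpaceBasis hinj) hmn hx

theorem sum_rootCovector_smul (hx : x ∈ rootSpace A n) :
    ∑ i, rootCovector hinj n i x • rootVector hinj n i = x := by
  have hcoord (i : Fin (rootMult A n)) : rootCovector hinj n i x =
      (rootSpaceBasis hinj n).repr ⟨x, hx⟩ i :=
    (isInternal_rootSpace hinj).collectedBasis_repr_of_mem (rootSpaceBasis hinj) hx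
  have hsum := congrArg Subtype.val ((rootSpaceBasis hinj n).sum_repr ⟨x, hx⟩)
  rw [Submodule.coe_sum] at hsum
  simp only [hcoord]
  simpa [rootVector, rootBasis] using hsum

theorem sum_rootCovector_smul_apply {M : Type*} [AddCommGroup M] [Module ℚ M]
    (f : Matrix.ToLieAlgebra ℚ A →ₗ[ℚ] M) (hx : x ∈ rootSpace A n) :
    ∑ i, rootCovector hinj n i x • f (rootVector hinj n i) = f x := by
  conv_rhs => rw [← sum_rootCovector_smul hinj hx]
  simp only [map_sum, map_smul]

end RootBasis

section SymmetricForm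

open Matrix

variable {ι : Type*} [Fintype ι] {A : Matrix ι ι ℤ}

namespace IsSymmSimplyLaced

theorem dotProduct_mulVec_comm (hA : IsSymmSimplyLaced A) (x y : ι → ℤ) :
    x ⬝ᵥ A *ᵥ y = y ⬝ᵥ A *ᵥ x := by
  rw [dotProduct_mulVec, ← mulVec_transpose, hA.isSymm, dotProduct_comm]

theorem norm_sub (hA : IsSymmSimplyLaced A) (x y : ι → ℤ) :
    (x - y) ⬝ᵥ A *ᵥ (x - y) = x ⬝ᵥ A *ᵥ x + y ⬝ᵥ A *ᵥ y - 2 * (x ⬝ᵥ A *ᵥ y) := by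
  rw [mulVec_sub, sub_dotProduct, dotProduct_sub, dotProduct_sub, hA.dotProduct_mulVec_comm y x]
  ring

theorem mulVec_apply_nonpos (hA : IsSymmSimplyLaced A) {x : ι → ℤ} (hx : 0 ≤ x) {i : ι}
    (hxi : x i = 0) : (A *ᵥ x) i ≤ 0 := by
  rw [mulVec, dotProduct]
  refine Finset.sum_nonpos fun j _ ↦ ?_
  obtain rfl | hj := eq_or_ne i j
  · simp [hxi]
  · refine mul_nonpos_of_nonpos_of_nonneg ?_ (hx j)
    rcases hA.isSimplyLaced hj with h | h <;> simp [h]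

variable [DecidableEq ι]

theorem norm_sub_single (hA : IsSymmSimplyLaced A) (x : ι → ℤ) (i : ι) (k : ℤ) :
    (x - Pi.single i k) ⬝ᵥ A *ᵥ (x - Pi.single i k) =
      x ⬝ᵥ A *ᵥ x + 2 * k ^ 2 - 2 * (k * (A *ᵥ x) i) := by
  rw [hA.norm_sub, hA.dotProduct_mulVec_comm x (Pi.single i k), single_dotProduct,
    single_dotProduct, mulVec_single, Pi.smul_apply, col_apply, hA.diag,
    MulOpposite.smul_eq_mul_unop, MulOpposite.unop_op]
  ring

theorem norm_single_one (hA : IsSymmSimplyLaced A) (i : ι) :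
    Pi.single i 1 ⬝ᵥ A *ᵥ Pi.single i 1 = 2 := by
  rw [mulVec_single_one, single_one_dotProduct, col_apply, hA.diag]

theorem norm_simpleReflection (hA : IsSymmSimplyLaced A) (i : ι) (x : ι → ℤ) :
    simpleReflection A i x ⬝ᵥ A *ᵥ simpleReflection A i x = x ⬝ᵥ A *ᵥ x := by
  rw [simpleReflection, hA.norm_sub_single]
  ring

end IsSymmSimplyLaced

end SymmetricForm

section CobracketTrace

open Matrix
open scoped TensorProduct

/-- The functional `x ⊗ₜ y ↦ φ x * ψ y`. -/
def dualTmul {V : Type*} [AddCommGroup V] [Module ℚ V] (φ ψ : Module.Dual ℚ V) :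
    Module.Dual ℚ (V ⊗[ℚ] V) :=
  TensorProduct.dualDistrib ℚ V V (φ ⊗ₜ ψ)

theorem dualTmul_tmul {V : Type*} [AddCommGroup V] [Module ℚ V] (φ ψ : Module.Dual ℚ V) (x y : V) :
    dualTmul φ ψ (x ⊗ₜ y) = φ x * ψ y := rfl

theorem dualTmul_wedge {L : Type*} [LieRing L] [LieAlgebra ℚ L] (φ ψ : Module.Dual ℚ L) (x y : L) :
    dualTmul φ ψ (wedge x y) = (φ x * ψ y - φ y * ψ x) / 2 := by
  rw [wedge_apply, map_smul, map_sub, dualTmul_tmul, dualTmul_tmul, smul_eq_mul]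
  ring

variable {ι : Type*} [Fintype ι] [DecidableEq ι] {A : Matrix ι ι ℤ}
  (hA : IsSymmSimplyLaced A) (hinj : Function.Injective A.mulVec)

local notation "𝔤" => Matrix.ToLieAlgebra ℚ A

variable {α β γ : ι → ℤ} {x y : Matrix.ToLieAlgebra ℚ A}
  {u : Matrix.ToLieAlgebra ℚ A ⊗[ℚ] Matrix.ToLieAlgebra ℚ A}

/-- The trace of bracket followed by reduced cobracket, as an endomorphism of the tensor product of
the root spaces of `α` and `β`. -/
def cobracketTrace (α β : ι → ℤ) : ℚ :=
  ∑ i, ∑ j, dualTmul (rootCovector hinj α i) (rootCovector hinj β j)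
    (reducedCobracket hA (α + β) ⁅rootVector hinj α i, rootVector hinj β j⁆)

theorem dualTmul_rootCovector_lie_left (hx : x ∈ rootSpace A α)
    (hu : u ∈ positiveTensors A β) (i : Fin (rootMult A α)) (ψ : Module.Dual ℚ 𝔤) :
    dualTmul (rootCovector hinj α i) ψ ⁅x, u⁆ =
      ∑ l, dualTmul (rootCovector hinj α i) (rootCovector hinj (β - α) l) u *
        ψ ⁅x, rootVector hinj (β - α) l⁆ := by
  refine (eqOn_positiveTensors
    (φ := dualTmul (rootCovector hinj α i) ψ ∘ₗ (LieModule.toEnd ℚ 𝔤 (𝔤 ⊗[ℚ] 𝔤) x))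
    (ψ := ∑ l, ψ ⁅x, rootVector hinj (β - α) l⁆ •
      dualTmul (rootCovector hinj α i) (rootCovector hinj (β - α) l))
    (fun a b y z ha hb hab hy hz ↦ ?_) hu).trans ?_
  · simp only [LinearMap.comp_apply, LieModule.toEnd_apply_apply,
      TensorProduct.LieModule.lie_tmul_right, map_add, dualTmul_tmul, LinearMap.sum_apply,
      LinearMap.smul_apply, smul_eq_mul]
    rw [rootCovector_of_mem_of_ne hinj (lie_mem_rootSpace hx hy) (by simpa using ha.ne')]
    obtain rfl | haα := eq_or_ne a α
    · obtain rfl : b = β - a := by rw [← hab, add_sub_cancel_left]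
      have hz' := sum_rootCovector_smul_apply hinj (ψ ∘ₗ LieModule.toEnd ℚ 𝔤 𝔤 x) hz
      simp only [LinearMap.comp_apply, LieModule.toEnd_apply_apply, smul_eq_mul] at hz'
      rw [zero_mul, zero_add, ← hz', Finset.mul_sum]
      exact Finset.sum_congr rfl fun _ _ ↦ by ring
    · simp [rootCovector_of_mem_of_ne hinj hy haα]
  · simp [mul_comm]

theorem dualTmul_rootCovector_lie_right (hy : y ∈ rootSpace A β)
    (hu : u ∈ positiveTensors A α) (j : Fin (rootMult A β)) (φ : Module.Dual ℚ 𝔤) :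
    dualTmul φ (rootCovector hinj β j) ⁅y, u⁆ =
      ∑ l, dualTmul (rootCovector hinj (α - β) l) (rootCovector hinj β j) u *
        φ ⁅y, rootVector hinj (α - β) l⁆ := by
  refine (eqOn_positiveTensors
    (φ := dualTmul φ (rootCovector hinj β j) ∘ₗ (LieModule.toEnd ℚ 𝔤 (𝔤 ⊗[ℚ] 𝔤) y))
    (ψ := ∑ l, φ ⁅y, rootVector hinj (α - β) l⁆ •
      dualTmul (rootCovector hinj (α - β) l) (rootCovector hinj β j))
    (fun a b x z ha hb hab hx hz ↦ ?_) hu).trans ?_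
  · simp only [LinearMap.comp_apply, LieModule.toEnd_apply_apply,
      TensorProduct.LieModule.lie_tmul_right, map_add, dualTmul_tmul, LinearMap.sum_apply,
      LinearMap.smul_apply, smul_eq_mul]
    rw [rootCovector_of_mem_of_ne hinj (lie_mem_rootSpace hy hz) (by simpa using hb.ne')]
    obtain rfl | hbβ := eq_or_ne b β
    · obtain rfl : a = α - b := by rw [← hab, add_sub_cancel_right]
      have hx' := sum_rootCovector_smul_apply hinj (φ ∘ₗ LieModule.toEnd ℚ 𝔤 𝔤 y) hx
      simp only [LinearMap.comp_apply, LieModule.toEnd_apply_apply, smul_eq_mul] at hx'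
      rw [mul_zero, add_zero, ← hx', Finset.sum_mul]
      exact Finset.sum_congr rfl fun _ _ ↦ by ring
    · simp [rootCovector_of_mem_of_ne hinj hz hbβ]
  · simp [mul_comm]

theorem dualTmul_rootCovector_eq_zero (hαβ : ¬(0 < α ∧ 0 < β)) (hu : u ∈ positiveTensors A γ)
    (i : Fin (rootMult A α)) (j : Fin (rootMult A β)) :
    dualTmul (rootCovector hinj α i) (rootCovector hinj β j) u = 0 := by
  refine eqOn_positiveTensors (ψ := 0) (fun a b x y ha hb _ hx hy ↦ ?_) hu
  rw [dualTmul_tmul, LinearMap.zero_apply]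
  obtain rfl | haα := eq_or_ne a α
  · rw [rootCovector_of_mem_of_ne hinj hy fun h ↦ hαβ ⟨ha, by rwa [← h]⟩, mul_zero]
  · rw [rootCovector_of_mem_of_ne hinj hx haα, zero_mul]

theorem cobracketTrace_of_not_pos (hαβ : ¬(0 < α ∧ 0 < β)) (hpos : 0 < α + β) :
    cobracketTrace hA hinj α β = 0 :=
  Finset.sum_eq_zero fun i _ ↦ Finset.sum_eq_zero fun j _ ↦
    dualTmul_rootCovector_eq_zero hinj hαβ (reducedCobracket_mem_positiveTensors hA hinj hpos
      (lie_mem_rootSpace (rootVector_mem hinj α i) (rootVector_mem hinj β j))) i j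

theorem cobracketTrace_of_rootMult_left (hα : rootMult A α = 0) (β : ι → ℤ) :
    cobracketTrace hA hinj α β = 0 := by
  have : IsEmpty (Fin (rootMult A α)) := by rw [hα]; infer_instance
  exact Fintype.sum_empty _

theorem cobracketTrace_of_rootMult_right (α : ι → ℤ) (hβ : rootMult A β = 0) :
    cobracketTrace hA hinj α β = 0 := by
  have : IsEmpty (Fin (rootMult A β)) := by rw [hβ]; infer_instance
  simp [cobracketTrace]

theorem sum_rootCovector_mul_rootCovector :
    ∑ i, ∑ j, rootCovector hinj α i (rootVector hinj β j) *
        rootCovector hinj β j (rootVector hinj α i) =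
      if α = β then (rootMult A α : ℚ) else 0 := by
  split_ifs with hαβ
  · subst hαβ
    simp [rootCovector_rootVector]
  · simp [rootCovector_of_mem_of_ne hinj (rootVector_mem hinj β _) (Ne.symm hαβ)]

theorem dualTmul_lie_cobracket_left (hα : 0 < α) (hβ : 0 < β) (hx : x ∈ rootSpace A α)
    (hy : y ∈ rootSpace A β) (i : Fin (rootMult A α)) (j : Fin (rootMult A β)) :
    dualTmul (rootCovector hinj α i) (rootCovector hinj β j) ⁅x, cobracket hA y⁆ =
      ((β ⬝ᵥ A *ᵥ α : ℤ) : ℚ) / 2 * (rootCovector hinj α i x * rootCovector hinj β j y -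
        rootCovector hinj α i y * rootCovector hinj β j x) +
      ∑ l, dualTmul (rootCovector hinj α i) (rootCovector hinj (β - α) l)
        (reducedCobracket hA β y) * rootCovector hinj β j ⁅x, rootVector hinj (β - α) l⁆ := by
  have hxy := lie_mem_rootSpace hx hy
  rw [cobracket_eq_add hA β, lie_add, map_add, lie_wedge, map_add, dualTmul_wedge,
    dualTmul_rootCovector_lie_left hinj hx (reducedCobracket_mem_positiveTensors hA hinj hβ hy),
    rootCovector_of_mem_of_ne hinj hxy (by simpa using hβ.ne'),
    rootCovector_of_mem_of_ne hinj hxy (by simpa using hα.ne'), lie_coroot hx, map_smul, map_smul,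
    dualTmul_wedge, smul_eq_mul]
  ring

theorem dualTmul_lie_cobracket_right (hα : 0 < α) (hβ : 0 < β) (hx : x ∈ rootSpace A α)
    (hy : y ∈ rootSpace A β) (i : Fin (rootMult A α)) (j : Fin (rootMult A β)) :
    dualTmul (rootCovector hinj α i) (rootCovector hinj β j) ⁅y, cobracket hA x⁆ =
      ((α ⬝ᵥ A *ᵥ β : ℤ) : ℚ) / 2 * (rootCovector hinj α i y * rootCovector hinj β j x -
        rootCovector hinj α i x * rootCovector hinj β j y) +
      ∑ l, dualTmul (rootCovector hinj (α - β) l) (rootCovector hinj β j)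
        (reducedCobracket hA α x) * rootCovector hinj α i ⁅y, rootVector hinj (α - β) l⁆ := by
  have hyx := lie_mem_rootSpace hy hx
  rw [cobracket_eq_add hA α, lie_add, map_add, lie_wedge, map_add, dualTmul_wedge,
    dualTmul_rootCovector_lie_right hinj hy (reducedCobracket_mem_positiveTensors hA hinj hα hx),
    rootCovector_of_mem_of_ne hinj hyx (by simpa using hβ.ne'),
    rootCovector_of_mem_of_ne hinj hyx (by simpa using hα.ne'), lie_coroot hy, map_smul, map_smul,
    dualTmul_wedge, smul_eq_mul]
  ring

theorem sum_dualTmul_mul_rootCovector_left (α β : ι → ℤ) :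
    ∑ i, ∑ j, ∑ l, dualTmul (rootCovector hinj α i) (rootCovector hinj (β - α) l)
        (reducedCobracket hA β (rootVector hinj β j)) *
          rootCovector hinj β j ⁅rootVector hinj α i, rootVector hinj (β - α) l⁆ =
      cobracketTrace hA hinj α (β - α) := by
  refine Finset.sum_congr rfl fun i _ ↦ Finset.sum_comm.trans (Finset.sum_congr rfl fun l _ ↦ ?_)
  have hz := lie_mem_rootSpace (rootVector_mem hinj α i) (rootVector_mem hinj (β - α) l)
  rw [add_sub_cancel] at hz ⊢
  simpa [mul_comm] using sum_rootCovector_smul_apply hinj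
    (dualTmul (rootCovector hinj α i) (rootCovector hinj (β - α) l) ∘ₗ reducedCobracket hA β) hz

theorem sum_dualTmul_mul_rootCovector_right (α β : ι → ℤ) :
    ∑ i, ∑ j, ∑ l, dualTmul (rootCovector hinj (α - β) l) (rootCovector hinj β j)
        (reducedCobracket hA α (rootVector hinj α i)) *
          rootCovector hinj α i ⁅rootVector hinj (α - β) l, rootVector hinj β j⁆ =
      cobracketTrace hA hinj (α - β) β := by
  rw [Finset.sum_comm, cobracketTrace]
  conv_rhs => rw [Finset.sum_comm]
  refine Finset.sum_congr rfl fun j _ ↦ ?_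
  rw [Finset.sum_comm]
  refine Finset.sum_congr rfl fun l _ ↦ ?_
  have hz := lie_mem_rootSpace (rootVector_mem hinj (α - β) l) (rootVector_mem hinj β j)
  rw [sub_add_cancel] at hz ⊢
  simpa [mul_comm] using sum_rootCovector_smul_apply hinj
    (dualTmul (rootCovector hinj (α - β) l) (rootCovector hinj β j) ∘ₗ reducedCobracket hA α) hz

theorem dualTmul_reducedCobracket_lie (hα : 0 < α) (hβ : 0 < β) (i : Fin (rootMult A α))
    (j : Fin (rootMult A β)) :
    dualTmul (rootCovector hinj α i) (rootCovector hinj β j)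
        (reducedCobracket hA (α + β) ⁅rootVector hinj α i, rootVector hinj β j⁆) =
      ((α ⬝ᵥ A *ᵥ β : ℤ) : ℚ) * (1 - rootCovector hinj α i (rootVector hinj β j) *
        rootCovector hinj β j (rootVector hinj α i)) +
      ∑ l, dualTmul (rootCovector hinj α i) (rootCovector hinj (β - α) l)
        (reducedCobracket hA β (rootVector hinj β j)) *
          rootCovector hinj β j ⁅rootVector hinj α i, rootVector hinj (β - α) l⁆ +
      ∑ l, dualTmul (rootCovector hinj (α - β) l) (rootCovector hinj β j)
        (reducedCobracket hA α (rootVector hinj α i)) *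
          rootCovector hinj α i ⁅rootVector hinj (α - β) l, rootVector hinj β j⁆ := by
  have hx := rootVector_mem hinj α i
  have hy := rootVector_mem hinj β j
  have hskew (l : Fin (rootMult A (α - β))) :
      rootCovector hinj α i ⁅rootVector hinj β j, rootVector hinj (α - β) l⁆ =
        -rootCovector hinj α i ⁅rootVector hinj (α - β) l, rootVector hinj β j⁆ := by
    rw [← lie_skew, map_neg]
  rw [reducedCobracket_apply, map_sub, dualTmul_wedge,
    rootCovector_of_mem_of_ne hinj (coroot_mem_rootSpace _) hα.ne,
    rootCovector_of_mem_of_ne hinj (coroot_mem_rootSpace _) hβ.ne, cobracket_lie, map_sub,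
    dualTmul_lie_cobracket_left hA hinj hα hβ hx hy,
    dualTmul_lie_cobracket_right hA hinj hα hβ hx hy, hA.dotProduct_mulVec_comm β]
  simp only [hskew, mul_neg, Finset.sum_neg_distrib, rootCovector_rootVector, if_true]
  ring

theorem cobracketTrace_eq_add (hα : 0 < α) (hβ : 0 < β) :
    cobracketTrace hA hinj α β =
      ((α ⬝ᵥ A *ᵥ β : ℤ) : ℚ) *
        (rootMult A α * rootMult A β - if α = β then (rootMult A α : ℚ) else 0) +
      cobracketTrace hA hinj α (β - α) + cobracketTrace hA hinj (α - β) β := by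
  rw [cobracketTrace]
  simp only [dualTmul_reducedCobracket_lie hA hinj hα hβ, Finset.sum_add_distrib,
    sum_dualTmul_mul_rootCovector_left, sum_dualTmul_mul_rootCovector_right, ← Finset.mul_sum,
    Finset.sum_sub_distrib, sum_rootCovector_mul_rootCovector]
  simp

theorem bracketHom_eq_sum (hu : u ∈ positiveTensors A β) :
    bracketHom A u = ∑ α ∈ Finset.Icc 0 β, ∑ i, ∑ j,
      dualTmul (rootCovector hinj α i) (rootCovector hinj (β - α) j) u •
        ⁅rootVector hinj α i, rootVector hinj (β - α) j⁆ := by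
  refine (eqOn_positiveTensors (φ := (bracketHom A).toLinearMap)
    (ψ := ∑ α ∈ Finset.Icc 0 β, ∑ i, ∑ j,
      (dualTmul (rootCovector hinj α i) (rootCovector hinj (β - α) j)).smulRight
        ⁅rootVector hinj α i, rootVector hinj (β - α) j⁆)
    (fun a b x y ha hb hab hx hy ↦ ?_) hu).trans (by simp [LinearMap.sum_apply])
  obtain rfl : b = β - a := by rw [← hab, add_sub_cancel_left]
  simp only [LinearMap.sum_apply, LinearMap.smulRight_apply, dualTmul_tmul]
  rw [Finset.sum_eq_single_of_mem a (Finset.mem_Icc.2 ⟨ha.le, sub_nonneg.1 hb.le⟩)]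
  · rw [LieModuleHom.coe_toLinearMap, LieModule.toModuleHom_apply]
    conv_lhs => rw [← sum_rootCovector_smul hinj hx, ← sum_rootCovector_smul hinj hy]
    simp only [sum_lie, lie_sum, smul_lie, lie_smul, Finset.smul_sum, smul_smul]
    rw [Finset.sum_comm]
    simp only [mul_comm]
  · intro α _ hα
    simp [rootCovector_of_mem_of_ne hinj hx hα.symm]

theorem sum_cobracketTrace (hβ : 0 < β) :
    ∑ α ∈ Finset.Icc 0 β, cobracketTrace hA hinj α (β - α) =
      ((β ⬝ᵥ A *ᵥ β - 2 * height β : ℤ) : ℚ) * rootMult A β := by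
  have hcoord (k : Fin (rootMult A β)) : ∑ α ∈ Finset.Icc 0 β, ∑ i, ∑ l,
      dualTmul (rootCovector hinj α i) (rootCovector hinj (β - α) l)
        (reducedCobracket hA β (rootVector hinj β k)) *
          rootCovector hinj β k ⁅rootVector hinj α i, rootVector hinj (β - α) l⁆ =
      ((β ⬝ᵥ A *ᵥ β - 2 * height β : ℤ) : ℚ) := by
    have hk := rootVector_mem hinj β k
    have hbracket := congrArg (rootCovector hinj β k) (bracketHom_eq_sum hinj
      (reducedCobracket_mem_positiveTensors hA hinj hβ hk))
    simp only [bracketHom_reducedCobracket hA hinj hβ hk, map_smul, map_sum, smul_eq_mul,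
      rootCovector_rootVector, if_true, mul_one] at hbracket
    exact hbracket.symm
  calc
    _ = ∑ α ∈ Finset.Icc 0 β, ∑ k, ∑ i, ∑ l,
        dualTmul (rootCovector hinj α i) (rootCovector hinj (β - α) l)
          (reducedCobracket hA β (rootVector hinj β k)) *
            rootCovector hinj β k ⁅rootVector hinj α i, rootVector hinj (β - α) l⁆ :=
      Finset.sum_congr rfl fun α _ ↦ by
        rw [← sum_dualTmul_mul_rootCovector_left, Finset.sum_comm]
    _ = _ := by
      rw [Finset.sum_comm, Finset.sum_congr rfl fun k _ ↦ hcoord k, Finset.sum_const,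
        Finset.card_fin, nsmul_eq_mul, mul_comm]

end CobracketTrace

section CertifiedSums

/-- A computation `o` of integers that may give up certifies the value `v` if it gives up or
returns `v`. -/
def Certifies (o : Option ℤ) (v : ℚ) : Prop :=
  ∀ z ∈ o, v = z

theorem Certifies.some {z : ℤ} {v : ℚ} (h : v = z) : Certifies (some z) v := by
  rintro _ ⟨⟩
  exact h

theorem Certifies.bind {o : Option ℤ} {v w : ℚ} {f : ℤ → Option ℤ} (h : Certifies o v)
    (hf : ∀ z : ℤ, v = z → Certifies (f z) w) : Certifies (o.bind f) w := by
  intro y hy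
  obtain ⟨z, hz, hyz⟩ := Option.mem_bind_iff.1 hy
  exact hf z (h z hz) y hyz

/-- The sum of `f t` over `t < n`. -/
def optionSum (f : ℕ → Option ℤ) : ℕ → Option ℤ
  | 0 => some 0
  | n + 1 => do return (← f n) + (← optionSum f n)

theorem certifies_optionSum {f : ℕ → Option ℤ} {v : ℕ → ℚ} {n : ℕ}
    (h : ∀ t < n, Certifies (f t) (v t)) :
    Certifies (optionSum f n) (∑ t ∈ Finset.range n, v t) := by
  induction n with
  | zero => exact .some (by simp)
  | succ n ih =>
    refine (h n n.lt_succ_self).bind fun y hy ↦ (ih fun t ht ↦ h t (by lia)).bind fun z hz ↦ ?_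
    exact .some (by rw [Finset.sum_range_succ, hy, hz]; push_cast; ring)

variable {ι : Type*}

/-- One step of a search through the integer points `z` of a box: the coordinate at `node` is
chosen after the one at `parent`, at the cost
`weight * (nodeCoeff * z node - parentCoeff * z parent) ^ 2`. -/
structure SearchStep (ι : Type*) where
  node : ι
  parent : ι
  weight : ℕ
  nodeCoeff : ℤ
  parentCoeff : ℤ

namespace SearchStep

/-- The cost of choosing `t` at the node when the coordinate at the parent is `u`. -/
def cost (s : SearchStep ι) (t u : ℤ) : ℤ :=
  s.weight * (s.nodeCoeff * t - s.parentCoeff * u) ^ 2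

theorem cost_nonneg (s : SearchStep ι) (t u : ℤ) : 0 ≤ s.cost t u := by
  unfold cost
  positivity

/-- The total cost of the point `z`. -/
def totalCost (steps : List (SearchStep ι)) (z : ι → ℤ) : ℤ :=
  (steps.map fun s ↦ s.cost (z s.node) (z s.parent)).sum

theorem totalCost_nonneg (steps : List (SearchStep ι)) (z : ι → ℤ) : 0 ≤ totalCost steps z :=
  List.sum_nonneg (by simpa using fun s _ ↦ s.cost_nonneg _ _)

theorem totalCost_cons (s : SearchStep ι) (steps : List (SearchStep ι)) (z : ι → ℤ) :
    totalCost (s :: steps) z = s.cost (z s.node) (z s.parent) + totalCost steps z := by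
  simp [totalCost]

/-- The coordinates occurring in a step are not changed by a later one. -/
def IsSearchOrder (steps : List (SearchStep ι)) : Prop :=
  (∀ s ∈ steps, s.parent ≠ s.node) ∧
    steps.Pairwise fun s s' ↦ s.node ≠ s'.node ∧ s.parent ≠ s'.node

variable [DecidableEq ι]

/-- The sum of `f z p' q'` over the points `0 ≤ z ≤ b` that agree with `x` outside the nodes of
`steps`, where the costs of `z` and `b - z` are charged to the budgets `p` and `q`, with the
balances `p'` and `q'`. Branches with an exhausted budget are skipped. -/
def prunedSum (f : (ι → ℤ) → ℤ → ℤ → Option ℤ) (b : ι → ℤ) :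
    List (SearchStep ι) → (ι → ℤ) → ℤ → ℤ → Option ℤ
  | [], x, p, q => f x p q
  | s :: steps, x, p, q =>
    optionSum (fun t ↦
      if s.cost t (x s.parent) ≤ p ∧ s.cost (b s.node - t) (b s.parent - x s.parent) ≤ q then
        prunedSum f b steps (Function.update x s.node t) (p - s.cost t (x s.parent))
          (q - s.cost (b s.node - t) (b s.parent - x s.parent))
      else some 0) ((b s.node).toNat + 1)

variable [Fintype ι]

/-- The integer points `0 ≤ z ≤ b` that agree with `x` outside `nodes`. -/
def box (b : ι → ℤ) (nodes : List ι) (x : ι → ℤ) : Finset (ι → ℤ) :=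
  {z ∈ Finset.Icc 0 b | ∀ i, i ∉ nodes → z i = x i}

variable {b x : ι → ℤ} {p q : ℤ}

theorem mem_box {nodes : List ι} {z : ι → ℤ} :
    z ∈ box b nodes x ↔ z ∈ Finset.Icc 0 b ∧ ∀ i, i ∉ nodes → z i = x i :=
  Finset.mem_filter

theorem sum_box_cons {c : ι} {nodes : List ι} (hc : c ∉ nodes) (F : (ι → ℤ) → ℚ) :
    ∑ z ∈ box b (c :: nodes) x, F z =
      ∑ t ∈ Finset.range ((b c).toNat + 1), ∑ z ∈ box b nodes (Function.update x c t), F z := by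
  rw [← Finset.sum_fiberwise_of_maps_to (g := fun z ↦ (z c).toNat)]
  · refine Finset.sum_congr rfl fun t _ ↦ Finset.sum_congr ?_ fun _ _ ↦ rfl
    ext z
    simp only [box, Finset.filter_filter, Finset.mem_filter, and_congr_right_iff, Finset.mem_Icc,
      List.mem_cons, not_or, Function.update_apply]
    rintro ⟨hz, -⟩
    have hzc : 0 ≤ z c := hz c
    refine ⟨fun ⟨h, ht⟩ i hi ↦ ?_, fun h ↦ ⟨fun i ⟨hic, hi⟩ ↦ ?_, ?_⟩⟩
    · split_ifs with hic
      · rw [hic, ← ht, Int.toNat_of_nonneg hzc]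
      · exact h i ⟨hic, hi⟩
    · simpa [hic] using h i hi
    · simpa using congrArg Int.toNat (h c hc)
  · intro z hz
    have hzc : z c ≤ b c := (Finset.mem_Icc.1 (mem_box.1 hz).1).2 c
    exact Finset.mem_range.2 (by lia)

theorem update_mem_Icc {c : ι} {t : ℕ} (hx : x ∈ Finset.Icc 0 b)
    (ht : t < (b c).toNat + 1) : Function.update x c (t : ℤ) ∈ Finset.Icc 0 b := by
  obtain ⟨h0, hb⟩ := Finset.mem_Icc.1 hx
  have hbc : 0 ≤ b c := (h0 c).trans (hb c)
  exact Finset.mem_Icc.2 ⟨le_update_iff.2 ⟨Int.natCast_nonneg t, fun i _ ↦ h0 i⟩,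
    update_le_iff.2 ⟨by lia, fun i _ ↦ hb i⟩⟩

theorem totalCost_of_mem_box {s : SearchStep ι} {steps : List (SearchStep ι)}
    (hsteps : IsSearchOrder (s :: steps)) {t : ℤ} {z : ι → ℤ}
    (hz : z ∈ box b (steps.map node) (Function.update x s.node t)) :
    totalCost (s :: steps) z = s.cost t (x s.parent) + totalCost steps z ∧
      totalCost (s :: steps) (b - z) =
        s.cost (b s.node - t) (b s.parent - x s.parent) + totalCost steps (b - z) := by
  obtain ⟨hne, hlater⟩ := hsteps
  have hfix : ∀ i, (∀ s' ∈ steps, i ≠ s'.node) → z i = Function.update x s.node t i :=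
    fun i hi ↦ (mem_box.1 hz).2 i (by simpa using fun s' hs' ↦ (hi s' hs').symm)
  have hnode : z s.node = t := by
    simpa using hfix _ fun s' hs' ↦ ((List.pairwise_cons.1 hlater).1 s' hs').1
  have hparent : z s.parent = x s.parent := by
    simpa [hne s List.mem_cons_self] using
      hfix _ fun s' hs' ↦ ((List.pairwise_cons.1 hlater).1 s' hs').2
  simp [totalCost_cons, hnode, hparent]

theorem mem_box_of_mem_box_update {c : ι} {nodes : List ι} {t : ℤ} {z : ι → ℤ}
    (hz : z ∈ box b nodes (Function.update x c t)) : z ∈ box b (c :: nodes) x := by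
  obtain ⟨hz, hfix⟩ := mem_box.1 hz
  refine mem_box.2 ⟨hz, fun i hi ↦ ?_⟩
  rw [List.mem_cons, not_or] at hi
  rw [hfix i hi.2, Function.update_of_ne hi.1]

theorem certifies_prunedSum {F : (ι → ℤ) → ℚ} {f : (ι → ℤ) → ℤ → ℤ → Option ℤ}
    {steps : List (SearchStep ι)} (hsteps : IsSearchOrder steps) (hx : x ∈ Finset.Icc 0 b)
    (hprune : ∀ z ∈ box b (steps.map node) x,
      p < totalCost steps z ∨ q < totalCost steps (b - z) → F z = 0)
    (heval : ∀ z ∈ box b (steps.map node) x,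
      Certifies (f z (p - totalCost steps z) (q - totalCost steps (b - z))) (F z)) :
    Certifies (prunedSum f b steps x p q) (∑ z ∈ box b (steps.map node) x, F z) := by
  induction steps generalizing x p q with
  | nil =>
    have hbox : box b [] x = {x} := by
      ext z
      simpa [box, ← funext_iff] using fun h : z = x ↦ h ▸ Finset.mem_Icc.1 hx
    simpa [hbox, totalCost, prunedSum] using heval x (by simp [hbox])
  | cons s steps ih =>
    have hnode : s.node ∉ steps.map node := fun h ↦ by
      obtain ⟨s', hs', h⟩ := List.mem_map.1 h
      exact ((List.pairwise_cons.1 hsteps.2).1 s' hs').1 h.symm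
    have hsteps' : IsSearchOrder steps :=
      ⟨fun s' hs' ↦ hsteps.1 s' (List.mem_cons_of_mem s hs'), hsteps.2.of_cons⟩
    rw [List.map_cons, sum_box_cons hnode]
    refine certifies_optionSum fun t ht ↦ ?_
    have hmem {z} (hz : z ∈ box b (steps.map node) (Function.update x s.node t)) :=
      mem_box_of_mem_box_update hz
    split_ifs with hbudget
    · refine ih hsteps' (update_mem_Icc hx ht) (fun z hz h ↦ hprune z (hmem hz) ?_)
        fun z hz ↦ ?_
      · rw [(totalCost_of_mem_box hsteps hz).1, (totalCost_of_mem_box hsteps hz).2]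
        exact h.imp (by lia) (by lia)
      · have hz' := heval z (hmem hz)
        rwa [(totalCost_of_mem_box hsteps hz).1, (totalCost_of_mem_box hsteps hz).2,
          ← sub_sub, ← sub_sub] at hz'
    · refine .some ((Finset.sum_eq_zero fun z hz ↦ hprune z (hmem hz) ?_).trans Int.cast_zero.symm)
      rw [(totalCost_of_mem_box hsteps hz).1, (totalCost_of_mem_box hsteps hz).2]
      have := totalCost_nonneg steps z
      have := totalCost_nonneg steps (b - z)
      lia

end SearchStep

end CertifiedSums

section EuclidTrace

open Matrix

variable {ι : Type*} [Fintype ι] [DecidableEq ι]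

/-- Evaluates the trace function `cobracketTrace` at `(x, y)` by subtracting the smaller of the two
vectors from the larger one as long as they are comparable. Here `p` and `q` are the norms of `x`
and `y`, `r` is their inner product, and `μ` gives the multiplicity of a root in terms of its norm,
where it is known. -/
def euclidTrace (μ : ℤ → Option ℤ) : ℕ → ℤ → ℤ → ℤ → (ι → ℤ) → (ι → ℤ) → Option ℤ
  | 0, _, _, _, _, _ => none
  | fuel + 1, p, q, r, x, y => do
    let a ← μ p
    let b ← μ q
    if a = 0 ∨ b = 0 then return 0
    else if x = y then return r * (a * b - a)
    else if ∀ i, x i ≤ y i then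
      return r * (a * b) + (← euclidTrace μ fuel p (p + q - 2 * r) (r - p) x (y - x))
    else if ∀ i, y i ≤ x i then
      return r * (a * b) + (← euclidTrace μ fuel (p + q - 2 * r) q (r - q) (x - y) y)
    else return r * (a * b)

variable {A : Matrix ι ι ℤ} (hA : IsSymmSimplyLaced A) (hinj : Function.Injective A.mulVec)
  {x y : ι → ℤ}

theorem cobracketTrace_sub_right (hy : 0 < y) (hxy : ¬x < y) :
    cobracketTrace hA hinj x (y - x) = 0 :=
  cobracketTrace_of_not_pos hA hinj (fun h ↦ hxy (sub_pos.1 h.2)) (by simpa using hy)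

theorem cobracketTrace_sub_left (hx : 0 < x) (hyx : ¬y < x) :
    cobracketTrace hA hinj (x - y) y = 0 :=
  cobracketTrace_of_not_pos hA hinj (fun h ↦ hyx (sub_pos.1 h.1)) (by simpa using hx)

theorem cobracketTrace_self (hx : 0 < x) :
    cobracketTrace hA hinj x x =
      ((x ⬝ᵥ A *ᵥ x : ℤ) : ℚ) * (rootMult A x * rootMult A x - rootMult A x) := by
  rw [cobracketTrace_eq_add hA hinj hx hx, if_pos rfl,
    cobracketTrace_sub_right hA hinj hx (lt_irrefl x),
    cobracketTrace_sub_left hA hinj hx (lt_irrefl x), add_zero, add_zero]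

theorem cobracketTrace_of_lt (hx : 0 < x) (hxy : x < y) :
    cobracketTrace hA hinj x y =
      ((x ⬝ᵥ A *ᵥ y : ℤ) : ℚ) * (rootMult A x * rootMult A y) +
        cobracketTrace hA hinj x (y - x) := by
  rw [cobracketTrace_eq_add hA hinj hx (hx.trans hxy), if_neg hxy.ne, sub_zero,
    cobracketTrace_sub_left hA hinj hx hxy.asymm, add_zero]

theorem cobracketTrace_of_gt (hy : 0 < y) (hyx : y < x) :
    cobracketTrace hA hinj x y =
      ((x ⬝ᵥ A *ᵥ y : ℤ) : ℚ) * (rootMult A x * rootMult A y) +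
        cobracketTrace hA hinj (x - y) y := by
  rw [cobracketTrace_eq_add hA hinj (hy.trans hyx) hy, if_neg hyx.ne', sub_zero,
    cobracketTrace_sub_right hA hinj hy hyx.asymm, add_zero]

theorem cobracketTrace_of_not_le (hx : 0 < x) (hy : 0 < y) (hxy : ¬x ≤ y) (hyx : ¬y ≤ x) :
    cobracketTrace hA hinj x y =
      ((x ⬝ᵥ A *ᵥ y : ℤ) : ℚ) * (rootMult A x * rootMult A y) := by
  rw [cobracketTrace_eq_add hA hinj hx hy, if_neg fun h ↦ hxy h.le, sub_zero,
    cobracketTrace_sub_right hA hinj hy fun h ↦ hxy h.le,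
    cobracketTrace_sub_left hA hinj hx fun h ↦ hyx h.le, add_zero, add_zero]

theorem certifies_euclidTrace {μ : ℤ → Option ℤ} {fuel : ℕ} {p q r : ℤ} (hx : 0 < x) (hy : 0 < y)
    (hμ : ∀ z, 0 < z → z ≤ x ∨ z ≤ y → Certifies (μ (z ⬝ᵥ A *ᵥ z)) (rootMult A z))
    (hp : x ⬝ᵥ A *ᵥ x = p) (hq : y ⬝ᵥ A *ᵥ y = q) (hr : x ⬝ᵥ A *ᵥ y = r) :
    Certifies (euclidTrace μ fuel p q r x y) (cobracketTrace hA hinj x y) := by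
  induction fuel generalizing x y p q r with
  | zero => rintro _ ⟨⟩
  | succ fuel ih =>
    refine (hp ▸ hμ x hx (.inl le_rfl)).bind fun a ha ↦
      (hq ▸ hμ y hy (.inr le_rfl)).bind fun b hb ↦ ?_
    have hnorm : p + q - 2 * r = (y - x) ⬝ᵥ A *ᵥ (y - x) := by
      rw [hA.norm_sub, hA.dotProduct_mulVec_comm y x]
      lia
    split_ifs with hab hxy hle hge
    · refine .some ?_
      rcases hab with rfl | rfl
      · exact (cobracketTrace_of_rootMult_left hA hinj (by exact_mod_cast ha) y).trans (by simp)
      · exact (cobracketTrace_of_rootMult_right hA hinj x (by exact_mod_cast hb)).trans (by simp)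
    · obtain rfl := hxy
      refine .some ?_
      rw [cobracketTrace_self hA hinj hx, hr]
      nth_rewrite 2 [hb]
      rw [ha]
      push_cast
      ring
    · have hlt : x < y := lt_of_le_of_ne hle hxy
      have hyx : y - x ≤ y := sub_le_self y hx.le
      refine (ih hx (sub_pos.2 hlt) (fun z hz h ↦ hμ z hz (h.imp_right hyx.trans')) hp hnorm.symm
        (by rw [mulVec_sub, dotProduct_sub, hr, hp])).bind fun c hc ↦ .some ?_
      rw [cobracketTrace_of_lt hA hinj hx hlt, hc, hr, ha, hb]
      push_cast
      rfl
    · have hlt : y < x := lt_of_le_of_ne hge (Ne.symm hxy)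
      have hxy' : x - y ≤ x := sub_le_self x hy.le
      refine (ih (sub_pos.2 hlt) hy (fun z hz h ↦ hμ z hz (h.imp_left hxy'.trans'))
        (by rw [hnorm, hA.norm_sub, hA.norm_sub, hA.dotProduct_mulVec_comm y x]; ring) hq
        (by rw [sub_dotProduct, hr, hq])).bind fun c hc ↦ .some ?_
      rw [cobracketTrace_of_gt hA hinj hy hlt, hc, hr, ha, hb]
      push_cast
      rfl
    · refine .some ?_
      rw [cobracketTrace_of_not_le hA hinj hx hy hle hge, hr, ha, hb]
      push_cast
      rfl

end EuclidTrace

section ReflectionDescent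

open Matrix

variable {ι : Type*} [Fintype ι] [DecidableEq ι] {A : Matrix ι ι ℤ} {x : ι → ℤ} {i : ι}

theorem rootMult_eq_zero_of_lt_mulVec (hinj : Function.Injective A.mulVec) (hi : A i i = 2)
    (hx : 0 < x) (hlt : x i < (A *ᵥ x) i) (hne : x ≠ Pi.single i 1) : rootMult A x = 0 := by
  have hneg : simpleReflection A i x i < 0 := by
    simpa [simpleReflection] using hlt
  by_cases hle : simpleReflection A i x ≤ 0
  · have hsingle : x = Pi.single i (x i) := by
      ext j
      obtain rfl | hj := eq_or_ne j i
      · simp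
      · have := hle j
        simp only [simpleReflection, Pi.sub_apply, Pi.single_eq_of_ne hj, sub_zero] at this
        rw [Pi.single_eq_of_ne hj]
        exact le_antisymm this (hx.le j)
    have hpos : 0 < x i := Pi.single_pos.1 (hsingle ▸ hx)
    rw [hsingle]
    refine rootMult_single_of_one_lt hinj i (lt_of_le_of_ne hpos fun h ↦ hne ?_)
    rw [hsingle, ← h]
  · rw [← rootMult_simpleReflection hinj hi]
    exact rootMult_of_not_nonneg hinj (fun h ↦ hneg.not_ge (h i)) hle

theorem height_simpleReflection (i : ι) (x : ι → ℤ) :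
    height (simpleReflection A i x) = height x - (A *ᵥ x) i := by
  rw [simpleReflection, height_sub, height_single]

@[elab_as_elim]
theorem reflection_induction (A : Matrix ι ι ℤ) (hdiag : ∀ i, A i i = 2)
    {P : ∀ x : ι → ℤ, 0 < x → Prop}
    (antidominant : ∀ x (hx : 0 < x), A *ᵥ x ≤ 0 → (∀ y (hy : 0 < y), y < x → P y hy) → P x hx)
    (leave : ∀ x i (hx : 0 < x), x i < (A *ᵥ x) i → P x hx)
    (reflect : ∀ x i (hx : 0 < x), 0 < (A *ᵥ x) i → ∀ hpos : 0 < simpleReflection A i x,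
      P (simpleReflection A i x) hpos → P x hx) (x : ι → ℤ) (hx : 0 < x) : P x hx := by
  induction hk : (height x).toNat using Nat.strong_induction_on generalizing x with
  | _ k ih =>
    by_cases hanti : A *ᵥ x ≤ 0
    · refine antidominant x hx hanti fun y hy hyx ↦ ih _ ?_ y hy rfl
      have hlt := height_pos (sub_pos.2 hyx)
      have := height_pos hx
      rw [height_sub] at hlt
      lia
    obtain ⟨i, hi⟩ : ∃ i, 0 < (A *ᵥ x) i := by simpa [Pi.le_def] using hanti
    by_cases hlt : x i < (A *ᵥ x) i
    · exact leave x i hx hlt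
    have hne : simpleReflection A i x ≠ 0 := fun h ↦ hx.ne' <| by
      rw [← simpleReflection_simpleReflection (hdiag i) x, h]
      simp [simpleReflection]
    have hpos : 0 < simpleReflection A i x := by
      refine lt_of_le_of_ne (fun j ↦ ?_) hne.symm
      obtain rfl | hj := eq_or_ne j i
      · simpa [simpleReflection] using hlt
      · simpa [simpleReflection, hj] using hx.le j
    have hheight := height_simpleReflection (A := A) i x
    have := height_pos hpos
    exact reflect x i hx hi hpos (ih _ (by lia) _ hpos rfl)

theorem rootMult_eq_zero_of_two_lt_norm (hA : IsSymmSimplyLaced A)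
    (hinj : Function.Injective A.mulVec) (hx : 0 < x) (hnorm : 2 < x ⬝ᵥ A *ᵥ x) :
    rootMult A x = 0 := by
  induction x, hx using reflection_induction A hA.diag with
  | antidominant x hx hanti _ =>
    have : x ⬝ᵥ A *ᵥ x ≤ 0 :=
      Finset.sum_nonpos fun i _ ↦ mul_nonpos_of_nonneg_of_nonpos (hx.le i) (hanti i)
    lia
  | leave x i hx hlt =>
    refine rootMult_eq_zero_of_lt_mulVec hinj (hA.diag i) hx hlt ?_
    rintro rfl
    exact hnorm.ne' (hA.norm_single_one i)
  | reflect x i _ _ _ ih =>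
    rw [← rootMult_simpleReflection hinj (hA.diag i)]
    exact ih (by rwa [hA.norm_simpleReflection])

end ReflectionDescent

section E10

open Matrix

theorem isSymmSimplyLaced_E10M : IsSymmSimplyLaced E10M where
  isSymm := by decide
  diag := by decide
  isSimplyLaced := fun i j hij ↦ by
    beta_reduce
    unfold E10M
    rw [if_neg hij]
    split_ifs <;> simp

/-- The negatives of the fundamental coweights of `E10`, in the basis of simple roots. -/
def e10Coweight : Fin 10 → Fin 10 → ℤ :=
  ![![0, 1, 2, 3, 4, 5, 6, 4, 2, 3],
    ![1, 2, 4, 6, 8, 10, 12, 8, 4, 6],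
    ![2, 4, 6, 9, 12, 15, 18, 12, 6, 9],
    ![3, 6, 9, 12, 16, 20, 24, 16, 8, 12],
    ![4, 8, 12, 16, 20, 25, 30, 20, 10, 15],
    ![5, 10, 15, 20, 25, 30, 36, 24, 12, 18],
    ![6, 12, 18, 24, 30, 36, 42, 28, 14, 21],
    ![4, 8, 12, 16, 20, 24, 28, 18, 9, 14],
    ![2, 4, 6, 8, 10, 12, 14, 9, 4, 7],
    ![3, 6, 9, 12, 15, 18, 21, 14, 7, 10]]

theorem of_e10Coweight_mul_E10M : of e10Coweight * E10M = -1 := by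
  decide +kernel

theorem e10Coweight_dotProduct (i : Fin 10) (x : Fin 10 → ℤ) :
    e10Coweight i ⬝ᵥ E10M *ᵥ x = -x i := by
  calc e10Coweight i ⬝ᵥ E10M *ᵥ x = ((of e10Coweight * E10M) *ᵥ x) i := by
        rw [← mulVec_mulVec]; rfl
    _ = -x i := by rw [of_e10Coweight_mul_E10M, neg_mulVec, one_mulVec, Pi.neg_apply]

theorem mulVec_E10M_injective : Function.Injective E10M.mulVec := fun x y hxy ↦ by
  have h := congrArg (of e10Coweight *ᵥ ·) hxy
  simpa [mulVec_mulVec, of_e10Coweight_mul_E10M, neg_mulVec] using h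

/-- The squares in the diagonalisation `SearchStep.totalCost_e10Steps` of the norm of `E10`. -/
def e10Steps : List (SearchStep (Fin 10)) :=
  [⟨5, 6, 10, 7, 6⟩, ⟨4, 5, 14, 6, 5⟩, ⟨3, 4, 21, 5, 4⟩, ⟨2, 3, 35, 4, 3⟩, ⟨1, 2, 70, 3, 2⟩,
    ⟨0, 1, 210, 2, 1⟩, ⟨7, 6, 70, 3, 2⟩, ⟨8, 7, 210, 2, 1⟩, ⟨9, 6, 210, 2, 1⟩]

theorem totalCost_e10Steps (x : Fin 10 → ℤ) :
    SearchStep.totalCost e10Steps x = 420 * (x ⬝ᵥ E10M *ᵥ x) + 10 * x 6 ^ 2 := by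
  simp [SearchStep.totalCost, e10Steps, SearchStep.cost, dotProduct, Fin.sum_univ_succ,
    mulVec, E10M]
  ring

theorem norm_nonneg_of_apply_six_eq_zero {x : Fin 10 → ℤ} (hx : x 6 = 0) :
    0 ≤ x ⬝ᵥ E10M *ᵥ x := by
  have hcost := totalCost_e10Steps x
  have := SearchStep.totalCost_nonneg e10Steps x
  rw [hx] at hcost
  lia

theorem eq_zero_of_norm_eq_zero_of_apply_six_eq_zero {x : Fin 10 → ℤ} (hx : x 6 = 0)
    (hnorm : x ⬝ᵥ E10M *ᵥ x = 0) : x = 0 := by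
  have hcost := totalCost_e10Steps x
  rw [hnorm, hx] at hcost
  have h := fun c ↦ List.all_zero_of_le_zero_le_of_sum_eq_zero
    (by simpa using fun s _ ↦ s.cost_nonneg _ _) hcost (x := c)
  simp only [e10Steps, SearchStep.cost, List.map_cons, List.map_nil, List.mem_cons,
    List.not_mem_nil, or_false, forall_eq_or_imp, forall_eq, hx] at h
  simp only [mul_eq_zero, pow_eq_zero_iff two_ne_zero] at h
  ext j
  fin_cases j <;> simp <;> lia

variable {i : Fin 10} {x : Fin 10 → ℤ}

theorem coweight_mul_norm (hx : x i = 0) :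
    e10Coweight i 6 ^ 2 * (x ⬝ᵥ E10M *ᵥ x) =
      (e10Coweight i 6 • x - x 6 • e10Coweight i) ⬝ᵥ
        E10M *ᵥ (e10Coweight i 6 • x - x 6 • e10Coweight i) + e10Coweight i i * x 6 ^ 2 := by
  simp only [isSymmSimplyLaced_E10M.norm_sub, mulVec_smul, smul_dotProduct, dotProduct_smul,
    smul_eq_mul, isSymmSimplyLaced_E10M.dotProduct_mulVec_comm x, e10Coweight_dotProduct, hx]
  ring

theorem norm_nonneg_of_apply_eq_zero (hx : x i = 0) : 0 ≤ x ⬝ᵥ E10M *ᵥ x := by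
  have hpos : ∀ i, 0 < e10Coweight i 6 ∧ 0 ≤ e10Coweight i i := by decide
  refine nonneg_of_mul_nonneg_right ?_ (pow_pos (hpos i).1 2)
  rw [coweight_mul_norm hx]
  refine add_nonneg (norm_nonneg_of_apply_six_eq_zero ?_) (mul_nonneg (hpos i).2 (sq_nonneg _))
  simp [mul_comm]

theorem eq_zero_of_norm_eq_zero_of_apply_eq_zero (hi : i ≠ 0) (hx : x i = 0)
    (hnorm : x ⬝ᵥ E10M *ᵥ x = 0) : x = 0 := by
  have hpos : ∀ i, i ≠ 0 → 0 < e10Coweight i i := by decide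
  refine eq_zero_of_norm_eq_zero_of_apply_six_eq_zero ?_ hnorm
  have h := coweight_mul_norm hx
  rw [hnorm, mul_zero] at h
  have hproj := norm_nonneg_of_apply_six_eq_zero
    (x := e10Coweight i 6 • x - x 6 • e10Coweight i) (by simp [mul_comm])
  have hsq := mul_nonneg (hpos i hi).le (sq_nonneg (x 6))
  have hzero : e10Coweight i i * x 6 ^ 2 = 0 := by lia
  simpa [(hpos i hi).ne'] using hzero

theorem eq_single_one_of_lt_mulVec (hx : 0 < x) (hlt : x i < (E10M *ᵥ x) i)
    (hnorm : x ⬝ᵥ E10M *ᵥ x ≤ 2) : x = Pi.single i 1 := by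
  set y := x - Pi.single i (x i) with hy
  have hyi : y i = 0 := by simp [hy]
  have hy0 : 0 ≤ y := fun j ↦ by
    obtain rfl | hj := eq_or_ne j i
    · exact hyi.ge
    · simpa [hy, hj] using hx.le j
  have hAy : (E10M *ᵥ y) i = (E10M *ᵥ x) i - 2 * x i := by
    simp [hy, mulVec_sub, isSymmSimplyLaced_E10M.diag, mul_comm]
  have hAy0 : (E10M *ᵥ y) i ≤ 0 := isSymmSimplyLaced_E10M.mulVec_apply_nonpos hy0 hyi
  have hnormy := isSymmSimplyLaced_E10M.norm_sub_single x i (x i)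
  have hnormy0 := norm_nonneg_of_apply_eq_zero hyi
  have hxi : x i = 1 := by nlinarith
  rw [hxi] at hnormy hAy hlt
  have hyzero : y = 0 := by
    by_cases hi : i = 0
    · subst hi
      refine eq_zero_of_norm_eq_zero_of_apply_eq_zero (i := 1) (by decide) ?_ (by lia)
      have : (E10M *ᵥ y) 0 = 2 * y 0 - y 1 := by
        simp [mulVec, dotProduct, Fin.sum_univ_succ, E10M]
        ring
      lia
    · exact eq_zero_of_norm_eq_zero_of_apply_eq_zero hi hyi (by lia)
  rw [← hxi]
  exact sub_eq_zero.1 hyzero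

end E10

section E10Antidominant

open Matrix

/-- The antidominant elements `0 < x` of the root lattice of `E10` of norm at least `-4` and height
at most `120`. -/
def smallAntidominant : List (Fin 10 → ℤ) :=
  [e10Coweight 0, 2 • e10Coweight 0, 3 • e10Coweight 0, 4 • e10Coweight 0, e10Coweight 1,
    e10Coweight 0 + e10Coweight 1, e10Coweight 8]

variable {x : Fin 10 → ℤ}

theorem eq_sum_e10Coweight (x : Fin 10 → ℤ) : x = ∑ k, (-(E10M *ᵥ x)) k • e10Coweight k := by
  have hsymm : (of e10Coweight)ᵀ = of e10Coweight := by decide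
  calc x = of e10Coweight *ᵥ -(E10M *ᵥ x) := by
        rw [mulVec_neg, mulVec_mulVec, of_e10Coweight_mul_E10M, neg_mulVec, one_mulVec, neg_neg]
    _ = ∑ k, (-(E10M *ᵥ x)) k • e10Coweight k := by
        rw [← hsymm, mulVec_transpose, vecMul_eq_sum]; rfl

theorem mulVec_eq_zero_of_antidominant (hx : 0 < x) (hanti : E10M *ᵥ x ≤ 0)
    (hnorm : -4 ≤ x ⬝ᵥ E10M *ᵥ x) {k : Fin 10} (hk : k ≠ 0 ∧ k ≠ 1 ∧ k ≠ 8) :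
    (E10M *ᵥ x) k = 0 := by
  have hnonneg : ∀ j, 0 ≤ e10Coweight j k := by decide +revert
  have hdiag : 6 ≤ e10Coweight k k := by decide +revert
  have hc : ∀ j, 0 ≤ -(E10M *ᵥ x) j := fun j ↦ neg_nonneg.2 (hanti j)
  have hle : -(E10M *ᵥ x) k * e10Coweight k k ≤ x k := by
    conv_rhs => rw [eq_sum_e10Coweight x, Finset.sum_apply]
    exact Finset.single_le_sum (f := fun j ↦ -(E10M *ᵥ x) j * e10Coweight j k)
      (fun j _ ↦ mul_nonneg (hc j) (hnonneg j)) (Finset.mem_univ k)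
  have hterm : x k * -(E10M *ᵥ x) k ≤ x ⬝ᵥ -(E10M *ᵥ x) :=
    Finset.single_le_sum (f := fun j ↦ x j * -(E10M *ᵥ x) j)
      (fun j _ ↦ mul_nonneg (hx.le j) (hc j)) (Finset.mem_univ k)
  rw [dotProduct_neg] at hterm
  by_contra hne
  have hpos : 1 ≤ -(E10M *ᵥ x) k := by
    have := hc k
    lia
  have hxk : 6 ≤ x k := by nlinarith
  nlinarith

theorem exists_eq_of_antidominant (hx : 0 < x) (hanti : E10M *ᵥ x ≤ 0)
    (hnorm : -4 ≤ x ⬝ᵥ E10M *ᵥ x) : ∃ c₀ c₁ c₈ : ℕ,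
      x = c₀ • e10Coweight 0 + c₁ • e10Coweight 1 + c₈ • e10Coweight 8 := by
  have hc : ∀ k, ∃ c : ℕ, -(E10M *ᵥ x) k = c := fun k ↦
    Int.eq_ofNat_of_zero_le (neg_nonneg.2 (hanti k))
  choose c hc using hc
  refine ⟨c 0, c 1, c 8, ?_⟩
  calc x = ∑ k ∈ {0, 1, 8}, (-(E10M *ᵥ x)) k • e10Coweight k := by
        conv_lhs => rw [eq_sum_e10Coweight x]
        refine (Finset.sum_subset (Finset.subset_univ _) fun k _ hk ↦ ?_).symm
        simp only [Finset.mem_insert, Finset.mem_singleton, not_or] at hk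
        simp [mulVec_eq_zero_of_antidominant hx hanti hnorm hk]
    _ = c 0 • e10Coweight 0 + c 1 • e10Coweight 1 + c 8 • e10Coweight 8 := by
        simp [hc, add_assoc]

theorem mem_smallAntidominant (hx : 0 < x) (hanti : E10M *ᵥ x ≤ 0)
    (hnorm : -4 ≤ x ⬝ᵥ E10M *ᵥ x) (hheight : height x ≤ 120) : x ∈ smallAntidominant := by
  obtain ⟨c₀, c₁, c₈, rfl⟩ := exists_eq_of_antidominant hx hanti hnorm
  have hnormc : (c₀ • e10Coweight 0 + c₁ • e10Coweight 1 + c₈ • e10Coweight 8) ⬝ᵥ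
      E10M *ᵥ (c₀ • e10Coweight 0 + c₁ • e10Coweight 1 + c₈ • e10Coweight 8) =
        -(2 * c₁ ^ 2 + 4 * c₈ ^ 2 + 2 * c₀ * c₁ + 4 * c₀ * c₈ + 8 * c₁ * c₈ : ℤ) := by
    simp only [add_dotProduct, smul_dotProduct, e10Coweight_dotProduct]
    simp [e10Coweight]
    ring
  have hheightc : height (c₀ • e10Coweight 0 + c₁ • e10Coweight 1 + c₈ • e10Coweight 8) =
      30 * c₀ + 61 * c₁ + 76 * c₈ := by
    simp [height, e10Coweight, Fin.sum_univ_succ]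
    ring
  have h₀ : c₀ ≤ 4 := by lia
  have h₁ : c₁ ≤ 1 := by nlinarith
  have h₈ : c₈ ≤ 1 := by nlinarith
  interval_cases c₀ <;> interval_cases c₁ <;> interval_cases c₈ <;>
    simp_all [smallAntidominant]

end E10Antidominant

section E10TraceSum

open Matrix

/-- The multiplicity of the roots of `E10` of norm `p` and height at most `120`, for `-4 ≤ p`: the
number of partitions of `1 - p / 2` into parts of `8` colours. -/
def smallMult (p : ℤ) : Option ℤ :=
  if 2 < p then some 0
  else if p = 2 then some 1
  else if p = 0 then some 8
  else if p = -2 then some 44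
  else if p = -4 then some 192
  else none

/-- The trace function `cobracketTrace` of `E10` at `(x, b - x)`, where `p` and `q` are the norms of
`x` and `b - x`. -/
def e10Trace (b x : Fin 10 → ℤ) (p q : ℤ) : Option ℤ :=
  if x = 0 ∨ b - x = 0 then some 0
  else euclidTrace smallMult 40 p q ((b ⬝ᵥ E10M *ᵥ b - p - q) / 2) x (b - x)

/-- The sum of `cobracketTrace` of `E10` at `(x, b - x)` over the lattice points `0 ≤ x ≤ b`. By
`SearchStep.totalCost_e10Steps` the budgets say that `x` and `b - x` have norm at most `2`. -/
def e10TraceSum (b : Fin 10 → ℤ) : Option ℤ :=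
  optionSum (fun t ↦
    SearchStep.prunedSum (fun x p q ↦ e10Trace b x (2 - p / 420) (2 - q / 420)) b e10Steps
      (Function.update 0 6 (t : ℤ)) (840 + 10 * t ^ 2) (840 + 10 * (b 6 - t) ^ 2))
    ((b 6).toNat + 1)

local notation "τ" => cobracketTrace isSymmSimplyLaced_E10M mulVec_E10M_injective

variable {b x : Fin 10 → ℤ}

theorem certifies_e10Trace {p q : ℤ} (hb : 0 < b) (hx : x ∈ Finset.Icc 0 b)
    (hμ : ∀ z, 0 < z → z < b → Certifies (smallMult (z ⬝ᵥ E10M *ᵥ z)) (rootMult E10M z))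
    (hp : x ⬝ᵥ E10M *ᵥ x = p) (hq : (b - x) ⬝ᵥ E10M *ᵥ (b - x) = q) :
    Certifies (e10Trace b x p q) (τ x (b - x)) := by
  obtain ⟨hx0, hxb⟩ := Finset.mem_Icc.1 hx
  rw [e10Trace]
  split_ifs with h
  · refine .some ((cobracketTrace_of_not_pos _ _ (fun hpos ↦ ?_) (by simpa)).trans (by simp))
    exact h.elim hpos.1.ne' hpos.2.ne'
  rw [not_or] at h
  have hxpos : 0 < x := lt_of_le_of_ne hx0 (Ne.symm h.1)
  have hypos : 0 < b - x := lt_of_le_of_ne (sub_nonneg.2 hxb) (Ne.symm h.2)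
  refine certifies_euclidTrace _ _ hxpos hypos (fun z hz hle ↦ hμ z hz ?_) hp hq ?_
  · rcases hle with hle | hle
    · exact hle.trans_lt (sub_pos.1 hypos)
    · exact hle.trans_lt (sub_lt_self b hxpos)
  · have hb : b ⬝ᵥ E10M *ᵥ b = p + q + 2 * (x ⬝ᵥ E10M *ᵥ (b - x)) := by
      rw [← hq, isSymmSimplyLaced_E10M.norm_sub, mulVec_sub, dotProduct_sub, hp,
        isSymmSimplyLaced_E10M.dotProduct_mulVec_comm b x]
      ring
    lia

theorem cobracketTrace_eq_zero_of_totalCost {z : Fin 10 → ℤ} (hb : 0 < b)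
    (hcost : 840 + 10 * z 6 ^ 2 < SearchStep.totalCost e10Steps z ∨
      840 + 10 * (b - z) 6 ^ 2 < SearchStep.totalCost e10Steps (b - z)) :
    τ z (b - z) = 0 := by
  rw [totalCost_e10Steps, totalCost_e10Steps] at hcost
  by_cases hpos : 0 < z ∧ 0 < b - z
  · have hzero {y} (hy : 0 < y) (hnorm : 2 < y ⬝ᵥ E10M *ᵥ y) : rootMult E10M y = 0 :=
      rootMult_eq_zero_of_two_lt_norm isSymmSimplyLaced_E10M mulVec_E10M_injective hy hnorm
    rcases hcost with hcost | hcost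
    · exact cobracketTrace_of_rootMult_left _ _ (hzero hpos.1 (by lia)) _
    · exact cobracketTrace_of_rootMult_right _ _ _ (hzero hpos.2 (by lia))
  · exact cobracketTrace_of_not_pos _ _ hpos (by simpa)

theorem certifies_e10TraceSum (hb : 0 < b)
    (hμ : ∀ z, 0 < z → z < b → Certifies (smallMult (z ⬝ᵥ E10M *ᵥ z)) (rootMult E10M z)) :
    Certifies (e10TraceSum b) (∑ z ∈ Finset.Icc 0 b, τ z (b - z)) := by
  have hbox : Finset.Icc 0 b = SearchStep.box b (6 :: e10Steps.map SearchStep.node) 0 := by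
    have hall : ∀ i, i ∈ (6 :: e10Steps.map SearchStep.node) := by decide
    ext z
    simp [SearchStep.mem_box, hall]
  rw [hbox, SearchStep.sum_box_cons (by decide)]
  refine certifies_optionSum fun t ht ↦ ?_
  have h6 : ∀ z ∈ SearchStep.box b (e10Steps.map SearchStep.node) (Function.update 0 6 (t : ℤ)),
      z ∈ Finset.Icc 0 b ∧ z 6 = t := fun z hz ↦ by
    obtain ⟨hzb, hfix⟩ := SearchStep.mem_box.1 hz
    exact ⟨hzb, by simpa using hfix 6 (by decide)⟩
  refine SearchStep.certifies_prunedSum (by constructor <;> decide)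
    (SearchStep.update_mem_Icc (by simpa using hb.le) ht) (fun z hz hcost ↦ ?_) fun z hz ↦ ?_
  · obtain ⟨-, hz6⟩ := h6 z hz
    refine cobracketTrace_eq_zero_of_totalCost hb ?_
    simpa [hz6] using hcost
  · obtain ⟨hzb, hz6⟩ := h6 z hz
    refine certifies_e10Trace hb hzb hμ ?_ ?_ <;> rw [totalCost_e10Steps]
    · rw [hz6]
      lia
    · rw [Pi.sub_apply, hz6]
      lia

theorem rootMult_of_e10TraceSum {m : ℤ} (hb : 0 < b)
    (hμ : ∀ z, 0 < z → z < b → Certifies (smallMult (z ⬝ᵥ E10M *ᵥ z)) (rootMult E10M z))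
    (hne : b ⬝ᵥ E10M *ᵥ b ≠ 2 * height b)
    (hsum : e10TraceSum b = some ((b ⬝ᵥ E10M *ᵥ b - 2 * height b) * m)) :
    (rootMult E10M b : ℚ) = m := by
  have h := (sum_cobracketTrace isSymmSimplyLaced_E10M mulVec_E10M_injective hb).symm.trans
    (certifies_e10TraceSum hb hμ _ hsum)
  rw [Int.cast_mul] at h
  exact mul_left_cancel₀ (Int.cast_ne_zero.2 (sub_ne_zero.2 hne)) h

end E10TraceSum

section E10SmallMult

open Matrix

set_option maxRecDepth 100000 in
theorem e10TraceSum_of_mem_smallAntidominant : ∀ b ∈ smallAntidominant, e10TraceSum b =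
    (smallMult (b ⬝ᵥ E10M *ᵥ b)).map ((b ⬝ᵥ E10M *ᵥ b - 2 * height b) * ·) := by
  decide +kernel

theorem certifies_smallMult {x : Fin 10 → ℤ} (hx : 0 < x) (hheight : height x ≤ 120) :
    Certifies (smallMult (x ⬝ᵥ E10M *ᵥ x)) (rootMult E10M x) := by
  induction x, hx using reflection_induction E10M isSymmSimplyLaced_E10M.diag with
  | antidominant x hx hanti ih =>
    intro m hm
    have hmem : x ∈ smallAntidominant :=
      mem_smallAntidominant hx hanti (by simp only [smallMult] at hm; grind) hheight
    have hnorm : x ⬝ᵥ E10M *ᵥ x ≤ 0 :=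
      Finset.sum_nonpos fun i _ ↦ mul_nonpos_of_nonneg_of_nonpos (hx.le i) (hanti i)
    have := height_pos hx
    refine rootMult_of_e10TraceSum hx (fun y hy hyx ↦ ih y hy hyx ?_) (by lia) ?_
    · have := height_pos (sub_pos.2 hyx)
      rw [height_sub] at this
      lia
    · rw [e10TraceSum_of_mem_smallAntidominant x hmem, hm]
      rfl
  | leave x i hx hlt =>
    by_cases hnorm : 2 < x ⬝ᵥ E10M *ᵥ x
    · rw [rootMult_eq_zero_of_two_lt_norm isSymmSimplyLaced_E10M mulVec_E10M_injective hx hnorm,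
        smallMult, if_pos hnorm]
      exact .some (by simp)
    · obtain rfl := eq_single_one_of_lt_mulVec hx hlt (not_lt.1 hnorm)
      rw [isSymmSimplyLaced_E10M.norm_single_one,
        rootMult_single_one mulVec_E10M_injective isSymmSimplyLaced_E10M]
      exact .some (by simp)
  | reflect x i _ hi _ ih =>
    have hheightx := height_simpleReflection (A := E10M) i x
    rw [← rootMult_simpleReflection mulVec_E10M_injective (isSymmSimplyLaced_E10M.diag i),
      ← isSymmSimplyLaced_E10M.norm_simpleReflection i]
    exact ih (by lia)

theorem rootMult_of_height_le {b : Fin 10 → ℤ} {m : ℕ} (hb : 0 < b) (hheight : height b ≤ 121)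
    (hne : b ⬝ᵥ E10M *ᵥ b ≠ 2 * height b)
    (hsum : e10TraceSum b = some ((b ⬝ᵥ E10M *ᵥ b - 2 * height b) * m)) :
    rootMult E10M b = m := by
  have h := rootMult_of_e10TraceSum hb (fun z hz hzb ↦ certifies_smallMult hz ?_) hne hsum
  · exact_mod_cast h
  · have := height_pos (sub_pos.2 hzb)
    rw [height_sub] at this
    lia

set_option maxRecDepth 100000 in
theorem rootMult_e10Coweight_two : rootMult E10M (e10Coweight 2) = 727 :=
  rootMult_of_height_le (m := 727) (lt_of_le_of_ne (fun i ↦ by decide +revert) (by decide))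
    (by decide) (by decide) (by decide +kernel)

set_option maxRecDepth 100000 in
theorem rootMult_two_smul_e10Coweight_zero_add :
    rootMult E10M (2 • e10Coweight 0 + e10Coweight 1) = 726 :=
  rootMult_of_height_le (m := 726) (lt_of_le_of_ne (fun i ↦ by decide +revert) (by decide))
    (by decide) (by decide) (by decide +kernel)

end E10SmallMult

/-- **Anisotropy of `E10` root multiplicities.** There are two positive roots of `E10` of
height at most `340` with the same norm but different multiplicities: the root multiplicity
is not a function of the norm alone. -/
theorem e10_mult_anisotropy :
    ∃ n n' : Fin 10 → ℕ,
      n ≠ 0 ∧ ∑ i, n i ≤ 340 ∧ qform E10M n ≤ 2 ∧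
      n' ≠ 0 ∧ ∑ i, n' i ≤ 340 ∧ qform E10M n' ≤ 2 ∧
      qform E10M n = qform E10M n' ∧
      rootMult E10M (fun i => (n i : ℤ)) ≠ rootMult E10M (fun i => (n' i : ℤ)) := by
  have hn : (fun i ↦ ((![2, 4, 6, 9, 12, 15, 18, 12, 6, 9] : Fin 10 → ℕ) i : ℤ)) =
      e10Coweight 2 := by decide
  have hn' : (fun i ↦ ((![1, 4, 8, 12, 16, 20, 24, 16, 8, 12] : Fin 10 → ℕ) i : ℤ)) =
      2 • e10Coweight 0 + e10Coweight 1 := by decide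
  refine ⟨![2, 4, 6, 9, 12, 15, 18, 12, 6, 9], ![1, 4, 8, 12, 16, 20, 24, 16, 8, 12], by decide,
    by decide, by decide, by decide, by decide, by decide, by decide,
    ?_⟩
  rw [hn, hn', rootMult_e10Coweight_two, rootMult_two_smul_e10Coweight_zero_add]
  decide
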